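/- arXiv:1902.04739 — 2 statements merged into one kernel-verified Lean document; each statement's English description precedes it below -/
import Mathlib

section
/- Let N ≥ 2 and s ∈ [1/2, 1), or N ≥ 3 and s = 1. There exists C = C(N, s) > 0 such that for every radial smooth compactly supported u : ℝ^N → ℂ (i.e. u(x) depends only on |x|) and every x ∈ ℝ^N with x ≠ 0, |x|^{(N−2s)/2} |u(x)| ≤ C ‖u‖_{L²}^{1−s} ‖∇u‖_{L²}^{s}. -/
/-!
Write `N = n + 1`, `f` for the radial profile of `u`, `A = ∫ t ^ n |f|²` and `B = ∫ t ^ n |f'|²`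
over `(0, ∞)`. In polar coordinates it suffices to show `r ^ (N - 2s) |f r|² ≤ K A ^ (1 - s) B ^ s`.

Two estimates are available. Integrating `(|f|²)'` from `r` to infinity gives Strauss' bound
`r ^ n |f r|² ≤ 2 √(A B)`, and integrating `f'` gives `|f R - f r|² ≤ B ∫ t in r..R, t ^ (-n)`.
If `s < 1`, put `L = √(A / B)`: for `r ≥ L` the first estimate is enough because
`r ^ (1 - 2s) ≤ L ^ (1 - 2s)`, and for `r < L` the second one compares `f r` with `f L`.
If `s = 1` and `N ≥ 3`, the integral of `t ^ (-n)` converges at infinity, so the second estimate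
suffices on its own.
-/

open MeasureTheory Real
open scoped BigOperators

/-- The squared Euclidean norm of the gradient: `∑ i |∂ᵢ u(x)|²`. -/
noncomputable def gradSq {N : ℕ} {F : Type*} [NormedAddCommGroup F] [NormedSpace ℝ F]
    (u : EuclideanSpace ℝ (Fin N) → F) (x : EuclideanSpace ℝ (Fin N)) : ℝ :=
  ∑ i, ‖fderiv ℝ u x (EuclideanSpace.single i 1)‖ ^ 2

open Set
open scoped Interval

lemma sq_integral_mul_mul_le {α : Type*} [MeasurableSpace α] {μ : Measure α} {w f g : α → ℝ}
    (hw : 0 ≤ᵐ[μ] w) (hf : Integrable (fun x => w x * f x ^ 2) μ)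
    (hfg : Integrable (fun x => w x * (f x * g x)) μ)
    (hg : Integrable (fun x => w x * g x ^ 2) μ) :
    (∫ x, w x * (f x * g x) ∂μ) ^ 2 ≤ (∫ x, w x * f x ^ 2 ∂μ) * ∫ x, w x * g x ^ 2 ∂μ := by
  have hsum (l : ℝ) :
      Integrable (fun x => l * l * (w x * f x ^ 2) + 2 * l * (w x * (f x * g x))) μ :=
    (hf.const_mul _).add (hfg.const_mul _)
  have hquad (l : ℝ) : 0 ≤ (∫ x, w x * f x ^ 2 ∂μ) * (l * l) +
      2 * (∫ x, w x * (f x * g x) ∂μ) * l + ∫ x, w x * g x ^ 2 ∂μ :=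
    calc 0 ≤ ∫ x, w x * (l * f x + g x) ^ 2 ∂μ := by
          refine integral_nonneg_of_ae ?_
          filter_upwards [hw] with x hx
          exact mul_nonneg hx (sq_nonneg _)
      _ = ∫ x, (l * l * (w x * f x ^ 2) + 2 * l * (w x * (f x * g x)) + w x * g x ^ 2) ∂μ := by
          congr with x
          ring
      _ = _ := by
          rw [integral_add (hsum l) hg, integral_add (hf.const_mul _) (hfg.const_mul _),
            integral_const_mul, integral_const_mul]
          ring
  have := discrim_le_zero hquad
  rw [discrim] at this
  linarith

section Profile

variable {F : Type*} [NormedAddCommGroup F]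

lemma integrable_pow_mul {g : ℝ → ℝ} (hg : Continuous g) (hgc : HasCompactSupport g) (n : ℕ) :
    Integrable fun t => t ^ n * g t :=
  (by fun_prop : Continuous fun t => t ^ n * g t).integrable_of_hasCompactSupport hgc.mul_left

lemma integrable_pow_mul_norm_sq {f : ℝ → F} (hf : Continuous f) (hfc : HasCompactSupport f)
    (n : ℕ) : Integrable fun t => t ^ n * ‖f t‖ ^ 2 :=
  integrable_pow_mul (by fun_prop) (hfc.comp_left (g := fun y => ‖y‖ ^ 2) (by simp)) n

/-- The squared norm of `f` in `L²((0, ∞), t ^ n dt)`. For the radial function `f ‖x‖` on a space of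
dimension `n + 1` it is the squared `L²` norm divided by the area of the unit sphere. -/
noncomputable def radialNormSq (n : ℕ) (f : ℝ → F) : ℝ :=
  ∫ t in Ioi 0, t ^ n * ‖f t‖ ^ 2

lemma radialNormSq_nonneg (n : ℕ) (f : ℝ → F) : 0 ≤ radialNormSq n f :=
  setIntegral_nonneg measurableSet_Ioi fun t (ht : 0 < t) => by positivity

lemma setIntegral_pow_mul_norm_sq_le_radialNormSq {f : ℝ → F} (hf : Continuous f)
    (hfc : HasCompactSupport f) (n : ℕ) {S : Set ℝ} (hS : S ⊆ Ioi 0) :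
    ∫ t in S, t ^ n * ‖f t‖ ^ 2 ≤ radialNormSq n f := by
  refine setIntegral_mono_set (integrable_pow_mul_norm_sq hf hfc n).integrableOn ?_
    hS.eventuallyLE
  filter_upwards [ae_restrict_mem measurableSet_Ioi] with t (ht : 0 < t)
  simp only [Pi.zero_apply]
  positivity

variable [NormedSpace ℝ F] {f : ℝ → F} {n : ℕ} {s r R L : ℝ}

lemma norm_sq_le_two_mul_integral_Ioi (hf : ContDiff ℝ 1 f) (hfc : HasCompactSupport f) (r : ℝ) :
    ‖f r‖ ^ 2 ≤ 2 * ∫ t in Ioi r, ‖f t‖ * ‖deriv f t‖ := by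
  -- Composing with a functional that norms `f r` makes the squared norm differentiable.
  obtain ⟨φ, hφ, hφr⟩ := exists_dual_vector'' ℝ (f r)
  let g : ℝ → ℝ := fun t => φ (f t)
  have hderiv (t : ℝ) : HasDerivAt (fun t => g t ^ 2) (2 * (g t * φ (deriv f t))) t := by
    have hg : HasDerivAt g (φ (deriv f t)) t :=
      φ.hasFDerivAt.comp_hasDerivAt t (hf.differentiable one_ne_zero t).hasDerivAt
    simpa [mul_assoc] using hg.fun_pow 2
  have hφ_le (y : F) : |φ y| ≤ ‖y‖ := φ.le_of_opNorm_le_of_le hφ le_rfl |>.trans_eq (one_mul _)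
  have hg2 : ContDiff ℝ 1 fun t => g t ^ 2 := (φ.contDiff.comp hf).pow 2
  have hg2c : HasCompactSupport fun t => g t ^ 2 :=
    hfc.comp_left (g := fun y => φ y ^ 2) (by simp)
  have hf' := hf.continuous_deriv le_rfl
  have hint : Integrable fun t => ‖f t‖ * ‖deriv f t‖ :=
    (hf.continuous.norm.mul hf'.norm).integrable_of_hasCompactSupport hfc.norm.mul_right
  calc ‖f r‖ ^ 2 = -∫ t in Ioi r, deriv (fun t => g t ^ 2) t := by
        rw [hg2c.integral_Ioi_deriv_eq hg2 r, neg_neg]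
        simp [g, hφr]
    _ = ∫ t in Ioi r, -deriv (fun t => g t ^ 2) t := (integral_neg _).symm
    _ ≤ ∫ t in Ioi r, 2 * (‖f t‖ * ‖deriv f t‖) := by
        refine integral_mono ?_ (hint.const_mul 2).integrableOn fun t => ?_
        · exact ((hg2.continuous_deriv le_rfl).integrable_of_hasCompactSupport
            hg2c.deriv).neg.integrableOn
        · calc -deriv (fun t => g t ^ 2) t ≤ |2 * (g t * φ (deriv f t))| := by
                rw [(hderiv t).deriv]
                exact neg_le_abs _
            _ = 2 * (|φ (f t)| * |φ (deriv f t)|) := by simp [abs_mul, g]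
            _ ≤ 2 * (‖f t‖ * ‖deriv f t‖) := by gcongr <;> exact hφ_le _
    _ = 2 * ∫ t in Ioi r, ‖f t‖ * ‖deriv f t‖ := integral_const_mul _ _

lemma pow_mul_norm_sq_le_two_mul_integral_Ioi (hf : ContDiff ℝ 1 f) (hfc : HasCompactSupport f)
    (n : ℕ) (hr : 0 ≤ r) :
    r ^ n * ‖f r‖ ^ 2 ≤ 2 * ∫ t in Ioi 0, t ^ n * (‖f t‖ * ‖deriv f t‖) := by
  have hcont : Continuous fun t => ‖f t‖ * ‖deriv f t‖ :=
    hf.continuous.norm.mul (hf.continuous_deriv le_rfl).norm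
  have hsupp : HasCompactSupport fun t => ‖f t‖ * ‖deriv f t‖ := hfc.norm.mul_right
  have hint : Integrable fun t => t ^ n * (‖f t‖ * ‖deriv f t‖) := integrable_pow_mul hcont hsupp n
  calc r ^ n * ‖f r‖ ^ 2 ≤ r ^ n * (2 * ∫ t in Ioi r, ‖f t‖ * ‖deriv f t‖) := by
        gcongr
        exact norm_sq_le_two_mul_integral_Ioi hf hfc r
    _ = 2 * ∫ t in Ioi r, r ^ n * (‖f t‖ * ‖deriv f t‖) := by
        rw [integral_const_mul]
        ring
    _ ≤ 2 * ∫ t in Ioi r, t ^ n * (‖f t‖ * ‖deriv f t‖) := by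
        gcongr 2 * ?_
        refine setIntegral_mono_on
          ((hcont.integrable_of_hasCompactSupport hsupp).const_mul _).integrableOn
          hint.integrableOn measurableSet_Ioi fun t (ht : r < t) => ?_
        gcongr
    _ ≤ 2 * ∫ t in Ioi 0, t ^ n * (‖f t‖ * ‖deriv f t‖) := by
        gcongr 2 * ?_
        refine setIntegral_mono_set hint.integrableOn ?_ (Ioi_subset_Ioi hr).eventuallyLE
        filter_upwards [ae_restrict_mem measurableSet_Ioi] with t (ht : 0 < t)
        simp only [Pi.zero_apply]
        positivity

lemma sq_pow_mul_norm_sq_le (hf : ContDiff ℝ 1 f) (hfc : HasCompactSupport f) (n : ℕ)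
    (hr : 0 ≤ r) :
    (r ^ n * ‖f r‖ ^ 2) ^ 2 ≤ 4 * (radialNormSq n f * radialNormSq n (deriv f)) := by
  have hf' := hf.continuous_deriv le_rfl
  have hw : 0 ≤ᵐ[volume.restrict (Ioi 0)] fun t : ℝ => t ^ n := by
    filter_upwards [ae_restrict_mem measurableSet_Ioi] with t (ht : 0 < t)
    exact (pow_pos ht n).le
  calc (r ^ n * ‖f r‖ ^ 2) ^ 2
      ≤ (2 * ∫ t in Ioi 0, t ^ n * (‖f t‖ * ‖deriv f t‖)) ^ 2 :=
        pow_le_pow_left₀ (by positivity) (pow_mul_norm_sq_le_two_mul_integral_Ioi hf hfc n hr) 2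
    _ = 4 * (∫ t in Ioi 0, t ^ n * (‖f t‖ * ‖deriv f t‖)) ^ 2 := by ring
    _ ≤ 4 * (radialNormSq n f * radialNormSq n (deriv f)) := by
        gcongr
        exact sq_integral_mul_mul_le hw
          (integrable_pow_mul_norm_sq hf.continuous hfc n).integrableOn
          (integrable_pow_mul (hf.continuous.norm.mul hf'.norm) hfc.norm.mul_right n).integrableOn
          (integrable_pow_mul_norm_sq hf' hfc.deriv n).integrableOn

lemma intervalIntegrable_inv_pow (n : ℕ) (hr : 0 < r) (hR : 0 < R) :
    IntervalIntegrable (fun t : ℝ => (t ^ n)⁻¹) volume r R :=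
  intervalIntegral.intervalIntegrable_inv
    (fun _ ht => pow_ne_zero n ((lt_min hr hR).trans_le ht.1).ne') (by fun_prop)

lemma norm_sub_sq_le_integral_inv_pow_mul (hf : ContDiff ℝ 1 f) (hfc : HasCompactSupport f) (n : ℕ)
    (hr : 0 < r) (hrR : r ≤ R) :
    ‖f R - f r‖ ^ 2 ≤ (∫ t in r..R, (t ^ n)⁻¹) * radialNormSq n (deriv f) := by
  have hf' := hf.continuous_deriv le_rfl
  have hinv := (intervalIntegrable_inv_pow n hr (hr.trans_le hrR)).1
  have hpos : ∀ᵐ t ∂volume.restrict (Ioc r R), 0 < t := by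
    filter_upwards [ae_restrict_mem measurableSet_Ioc] with t ht using hr.trans ht.1
  have hinv_sq : (fun t : ℝ => t ^ n * (t ^ n)⁻¹ ^ 2) =ᵐ[volume.restrict (Ioc r R)]
      fun t => (t ^ n)⁻¹ := by
    filter_upwards [hpos] with t ht
    field_simp
  have hcross : (fun t : ℝ => t ^ n * ((t ^ n)⁻¹ * ‖deriv f t‖)) =ᵐ[volume.restrict (Ioc r R)]
      fun t => ‖deriv f t‖ := by
    filter_upwards [hpos] with t ht
    field_simp
  have hnorm : IntervalIntegrable (fun t => ‖deriv f t‖) volume r R :=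
    hf'.norm.intervalIntegrable r R
  calc ‖f R - f r‖ ^ 2 ≤ (∫ t in r..R, ‖deriv f t‖) ^ 2 := by
        gcongr
        exact norm_sub_le_integral_of_norm_deriv_le_of_le hrR hf.continuous.continuousOn
          (hf.differentiable one_ne_zero).differentiableOn (.of_forall fun _ _ => le_rfl) hnorm
    _ = (∫ t in Ioc r R, t ^ n * ((t ^ n)⁻¹ * ‖deriv f t‖)) ^ 2 := by
        rw [intervalIntegral.integral_of_le hrR, integral_congr_ae hcross]
    _ ≤ (∫ t in Ioc r R, t ^ n * (t ^ n)⁻¹ ^ 2) * ∫ t in Ioc r R, t ^ n * ‖deriv f t‖ ^ 2 :=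
        sq_integral_mul_mul_le (hpos.mono fun t ht => (pow_pos ht n).le)
          (hinv.congr hinv_sq.symm) (hnorm.1.congr hcross.symm)
          (integrable_pow_mul_norm_sq hf' hfc.deriv n).integrableOn
    _ ≤ (∫ t in r..R, (t ^ n)⁻¹) * radialNormSq n (deriv f) := by
        rw [integral_congr_ae hinv_sq, ← intervalIntegral.integral_of_le hrR]
        gcongr
        · exact intervalIntegral.integral_nonneg hrR fun t ht =>
            inv_nonneg.2 (pow_nonneg (hr.le.trans ht.1) n)
        · exact setIntegral_pow_mul_norm_sq_le_radialNormSq hf' hfc.deriv n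
            (Ioc_subset_Ioi_self.trans (Ioi_subset_Ioi hr.le))

lemma rpow_mul_integral_inv_pow_le {a : ℝ} (ha : 0 ≤ a) (hna : n < a + 1) (hr : 0 < r)
    (hrR : r ≤ R) :
    r ^ a * ∫ t in r..R, (t ^ n)⁻¹ ≤ R ^ (a + 1 - n) / (a + 1 - n) := by
  have : 0 < a + 1 - n := by linarith
  calc r ^ a * ∫ t in r..R, (t ^ n)⁻¹ = ∫ t in r..R, r ^ a * (t ^ n)⁻¹ :=
        (intervalIntegral.integral_const_mul _ _).symm
    _ ≤ ∫ t in r..R, t ^ (a - n) := by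
        refine intervalIntegral.integral_mono_on hrR
          ((intervalIntegrable_inv_pow n hr (hr.trans_le hrR)).const_mul _)
          (intervalIntegral.intervalIntegrable_rpow' (by linarith)) fun t ht => ?_
        have ht0 : 0 < t := hr.trans_le ht.1
        rw [rpow_sub ht0, rpow_natCast, div_eq_mul_inv]
        gcongr
        exact ht.1
    _ = (R ^ (a + 1 - n) - r ^ (a + 1 - n)) / (a + 1 - n) := by
        rw [integral_rpow (.inl (by linarith)), sub_add_eq_add_sub]
    _ ≤ R ^ (a + 1 - n) / (a + 1 - n) := by
        gcongr
        exact sub_le_self _ (by positivity)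

lemma rpow_mul_integral_inv_pow_le_inv (hn : 1 < n) (hr : 0 < r) (hrR : r ≤ R) :
    r ^ (n - 1 : ℝ) * ∫ t in r..R, (t ^ n)⁻¹ ≤ (n - 1 : ℝ)⁻¹ := by
  have hn' : (0 : ℝ) < n - 1 := by simpa using hn
  have hR := hr.trans_le hrR
  have h0 : (0 : ℝ) ∉ [[r, R]] := notMem_uIcc_of_lt hr hR
  calc r ^ (n - 1 : ℝ) * ∫ t in r..R, (t ^ n)⁻¹
      = r ^ (n - 1 : ℝ) * ∫ t in r..R, t ^ (-n : ℝ) := by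
        congr 1
        refine intervalIntegral.integral_congr fun t ht => ?_
        simp only [rpow_neg ((lt_min hr hR).trans_le ht.1).le, rpow_natCast]
    _ = r ^ (n - 1 : ℝ) * ((r ^ (1 - n : ℝ) - R ^ (1 - n : ℝ)) / (n - 1)) := by
        rw [integral_rpow (.inr ⟨by linarith, h0⟩), neg_add_eq_sub, ← neg_div_neg_eq, neg_sub,
          neg_sub]
    _ = (1 - r ^ (n - 1 : ℝ) * R ^ (1 - n : ℝ)) * (n - 1 : ℝ)⁻¹ := by
        rw [← mul_div_assoc, mul_sub, ← rpow_add hr, sub_add_sub_cancel, sub_self, rpow_zero,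
          div_eq_mul_inv]
    _ ≤ (n - 1 : ℝ)⁻¹ :=
        mul_le_of_le_one_left (by positivity) (sub_le_self _ (by positivity))

lemma rpow_mul_norm_sq_le_of_le (hf : ContDiff ℝ 1 f) (hfc : HasCompactSupport f)
    (hs : 1 / 2 ≤ s) (hL : 0 < L)
    (hAB : radialNormSq n f ≤ L ^ 2 * radialNormSq n (deriv f)) (hLr : L ≤ r) :
    r ^ (n + 1 - 2 * s) * ‖f r‖ ^ 2 ≤ 2 * (L ^ (2 * (1 - s)) * radialNormSq n (deriv f)) := by
  have hr : 0 < r := hL.trans_le hLr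
  have hB : 0 ≤ radialNormSq n (deriv f) := radialNormSq_nonneg _ _
  have hstrauss : r ^ n * ‖f r‖ ^ 2 ≤ 2 * L * radialNormSq n (deriv f) := by
    refine le_of_sq_le_sq ?_ (by positivity)
    calc (r ^ n * ‖f r‖ ^ 2) ^ 2 ≤ 4 * (radialNormSq n f * radialNormSq n (deriv f)) :=
          sq_pow_mul_norm_sq_le hf hfc n hr.le
      _ ≤ 4 * (L ^ 2 * radialNormSq n (deriv f) * radialNormSq n (deriv f)) := by gcongr
      _ = (2 * L * radialNormSq n (deriv f)) ^ 2 := by ring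
  calc r ^ (n + 1 - 2 * s) * ‖f r‖ ^ 2 = r ^ (1 - 2 * s) * (r ^ n * ‖f r‖ ^ 2) := by
        rw [add_sub_assoc, add_comm, rpow_add_natCast hr.ne', mul_assoc]
    _ ≤ L ^ (1 - 2 * s) * (2 * L * radialNormSq n (deriv f)) := by
        gcongr ?_ * ?_
        · exact rpow_le_rpow_of_nonpos hL hLr (by linarith)
    _ = 2 * (L ^ (1 - 2 * s + 1) * radialNormSq n (deriv f)) := by
        rw [rpow_add_one hL.ne']
        ring
    _ = 2 * (L ^ (2 * (1 - s)) * radialNormSq n (deriv f)) := by ring_nf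

lemma rpow_mul_norm_sq_le_of_ge (hf : ContDiff ℝ 1 f) (hfc : HasCompactSupport f)
    (hs : 1 / 2 ≤ s) (hs1 : s < 1) (hsn : 2 * s ≤ n + 1) (hr : 0 < r)
    (hAB : radialNormSq n f ≤ L ^ 2 * radialNormSq n (deriv f)) (hrL : r ≤ L) :
    r ^ (n + 1 - 2 * s) * ‖f r‖ ^ 2 ≤
      (4 + (1 - s)⁻¹) * (L ^ (2 * (1 - s)) * radialNormSq n (deriv f)) := by
  have hB : 0 ≤ radialNormSq n (deriv f) := radialNormSq_nonneg _ _
  have ha : 0 ≤ n + 1 - 2 * s := by linarith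
  have hnear : r ^ (n + 1 - 2 * s) * ‖f L - f r‖ ^ 2 ≤
      (2 * (1 - s))⁻¹ * (L ^ (2 * (1 - s)) * radialNormSq n (deriv f)) :=
    calc r ^ (n + 1 - 2 * s) * ‖f L - f r‖ ^ 2
        ≤ r ^ (n + 1 - 2 * s) * ((∫ t in r..L, (t ^ n)⁻¹) * radialNormSq n (deriv f)) := by
          gcongr
          exact norm_sub_sq_le_integral_inv_pow_mul hf hfc n hr hrL
      _ = r ^ (n + 1 - 2 * s) * (∫ t in r..L, (t ^ n)⁻¹) * radialNormSq n (deriv f) := by ring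
      _ ≤ L ^ (n + 1 - 2 * s + 1 - n) / (n + 1 - 2 * s + 1 - n) * radialNormSq n (deriv f) := by
          gcongr
          exact rpow_mul_integral_inv_pow_le ha (by linarith) hr hrL
      _ = (2 * (1 - s))⁻¹ * (L ^ (2 * (1 - s)) * radialNormSq n (deriv f)) := by
          rw [show n + 1 - 2 * s + 1 - n = 2 * (1 - s) by ring]
          ring
  have htriangle : ‖f r‖ ^ 2 ≤ 2 * (‖f L‖ ^ 2 + ‖f L - f r‖ ^ 2) :=
    calc ‖f r‖ ^ 2 ≤ (‖f L‖ + ‖f L - f r‖) ^ 2 := by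
          gcongr
          simpa using norm_sub_le (f L) (f L - f r)
      _ ≤ 2 * (‖f L‖ ^ 2 + ‖f L - f r‖ ^ 2) := add_sq_le
  calc r ^ (n + 1 - 2 * s) * ‖f r‖ ^ 2
      ≤ r ^ (n + 1 - 2 * s) * (2 * (‖f L‖ ^ 2 + ‖f L - f r‖ ^ 2)) := by gcongr
    _ = 2 * (r ^ (n + 1 - 2 * s) * ‖f L‖ ^ 2) + 2 * (r ^ (n + 1 - 2 * s) * ‖f L - f r‖ ^ 2) := by
        ring
    _ ≤ 2 * (L ^ (n + 1 - 2 * s) * ‖f L‖ ^ 2) +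
        2 * ((2 * (1 - s))⁻¹ * (L ^ (2 * (1 - s)) * radialNormSq n (deriv f))) := by gcongr
    _ ≤ 2 * (2 * (L ^ (2 * (1 - s)) * radialNormSq n (deriv f))) +
        2 * ((2 * (1 - s))⁻¹ * (L ^ (2 * (1 - s)) * radialNormSq n (deriv f))) := by
        gcongr 2 * ?_ + _
        exact rpow_mul_norm_sq_le_of_le hf hfc hs (hr.trans_le hrL) hAB le_rfl
    _ = (4 + (1 - s)⁻¹) * (L ^ (2 * (1 - s)) * radialNormSq n (deriv f)) := by
        rw [mul_inv]
        ring

lemma rpow_mul_norm_sq_le_of_lt_one (hf : ContDiff ℝ 1 f) (hfc : HasCompactSupport f)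
    (hs : 1 / 2 ≤ s) (hs1 : s < 1) (hsn : 2 * s ≤ n + 1) (hr : 0 < r) :
    r ^ (n + 1 - 2 * s) * ‖f r‖ ^ 2 ≤
      (4 + (1 - s)⁻¹) * (radialNormSq n f ^ (1 - s) * radialNormSq n (deriv f) ^ s) := by
  have h1s : 0 < 1 - s := sub_pos.2 hs1
  have hstrauss := sq_pow_mul_norm_sq_le hf hfc n hr.le
  rcases (radialNormSq_nonneg n f).eq_or_lt' with hA | hA
  · have : f r = 0 := by simpa [hA, hr.ne', sq_nonpos_iff] using hstrauss
    simp [this, hA, h1s.ne']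
  rcases (radialNormSq_nonneg n (deriv f)).eq_or_lt' with hB | hB
  · have : f r = 0 := by simpa [hB, hr.ne', sq_nonpos_iff] using hstrauss
    simp [this, hB, (by linarith : s ≠ 0)]
  set A := radialNormSq n f
  set B := radialNormSq n (deriv f)
  -- The length at which the two estimates balance.
  set L := √(A / B) with hL
  have hL0 : 0 < L := by positivity
  have hAB : A ≤ L ^ 2 * B := by
    rw [hL, sq_sqrt (by positivity), div_mul_cancel₀ _ hB.ne']
  have hLs : L ^ (2 * (1 - s)) * B = A ^ (1 - s) * B ^ s := by
    rw [hL, rpow_mul (sqrt_nonneg _), rpow_two, sq_sqrt (by positivity), div_rpow hA.le hB.le,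
      div_mul_eq_mul_div, mul_div_assoc, rpow_sub hB, rpow_one, div_div_cancel₀ hB.ne']
  rw [← hLs]
  rcases le_total L r with hLr | hrL
  · refine (rpow_mul_norm_sq_le_of_le hf hfc hs hL0 hAB hLr).trans ?_
    gcongr
    linarith [inv_pos.2 h1s]
  · exact rpow_mul_norm_sq_le_of_ge hf hfc hs hs1 hsn hr hAB hrL

lemma rpow_mul_norm_sq_le_inv_mul_radialNormSq_deriv (hf : ContDiff ℝ 1 f)
    (hfc : HasCompactSupport f) (hn : 1 < n) (hr : 0 < r) :
    r ^ (n - 1 : ℝ) * ‖f r‖ ^ 2 ≤ (n - 1 : ℝ)⁻¹ * radialNormSq n (deriv f) := by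
  obtain ⟨R, hR, hrR⟩ : ∃ R, f R = 0 ∧ r ≤ R := by
    have hzero : f =ᶠ[Filter.atTop] 0 :=
      (hasCompactSupport_iff_eventuallyEq.1 hfc).filter_mono
        (Filter.coclosedCompact_eq_cocompact (X := ℝ) ▸ atTop_le_cocompact)
    exact (hzero.and (Filter.eventually_ge_atTop r)).exists
  have hsub := norm_sub_sq_le_integral_inv_pow_mul hf hfc n hr hrR
  rw [hR, zero_sub, norm_neg] at hsub
  calc r ^ (n - 1 : ℝ) * ‖f r‖ ^ 2
      ≤ r ^ (n - 1 : ℝ) * ((∫ t in r..R, (t ^ n)⁻¹) * radialNormSq n (deriv f)) := by gcongr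
    _ = r ^ (n - 1 : ℝ) * (∫ t in r..R, (t ^ n)⁻¹) * radialNormSq n (deriv f) := by ring
    _ ≤ (n - 1 : ℝ)⁻¹ * radialNormSq n (deriv f) := by
        gcongr
        · exact radialNormSq_nonneg _ _
        · exact rpow_mul_integral_inv_pow_le_inv hn hr hrR

lemma exists_rpow_mul_norm_sq_le (F : Type*) [NormedAddCommGroup F] [NormedSpace ℝ F]
    (hs : 1 / 2 ≤ s) (h : (s < 1 ∧ 2 * s ≤ n + 1) ∨ (s = 1 ∧ 1 < n)) :
    ∃ K > 0, ∀ f : ℝ → F, ContDiff ℝ 1 f → HasCompactSupport f → ∀ r > 0,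
      r ^ (n + 1 - 2 * s) * ‖f r‖ ^ 2 ≤
        K * (radialNormSq n f ^ (1 - s) * radialNormSq n (deriv f) ^ s) := by
  rcases h with ⟨hs1, hsn⟩ | ⟨rfl, hn⟩
  · have : 0 < 1 - s := sub_pos.2 hs1
    exact ⟨4 + (1 - s)⁻¹, by positivity, fun f hf hfc r hr =>
      rpow_mul_norm_sq_le_of_lt_one hf hfc hs hs1 hsn hr⟩
  · have hn' : (0 : ℝ) < n - 1 := by simpa using hn
    refine ⟨(n - 1 : ℝ)⁻¹, by positivity, fun f hf hfc r hr => ?_⟩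
    rw [show (n + 1 - 2 * 1 : ℝ) = n - 1 by ring]
    simpa using rpow_mul_norm_sq_le_inv_mul_radialNormSq_deriv hf hfc hn hr

end Profile

section Radial

variable {E F : Type*} [NormedAddCommGroup E] [NormedSpace ℝ E]

/-- The function `u` is radial: its value at `x` depends only on `‖x‖`. -/
def IsRadial (u : E → F) : Prop :=
  ∀ x y, ‖x‖ = ‖y‖ → u x = u y

variable {u : E → F} {e : E}

lemma IsRadial.apply_norm_smul (hu : IsRadial u) (he : ‖e‖ = 1) (z : E) : u (‖z‖ • e) = u z :=
  hu _ _ (by simp [norm_smul, he])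

lemma IsRadial.comp_smul_eq (hu : IsRadial u) {v : E} (he : ‖e‖ = 1) (hv : ‖v‖ = 1) :
    (fun t : ℝ => u (t • e)) = fun t : ℝ => u (t • v) :=
  funext fun _ => hu _ _ (by simp [norm_smul, he, hv])

lemma hasCompactSupport_comp_smul_const [Zero F] (hu : HasCompactSupport u) (he : e ≠ 0) :
    HasCompactSupport fun t : ℝ => u (t • e) :=
  hu.comp_isClosedEmbedding ((LinearMap.toSpanSingleton ℝ E e).isClosedEmbedding_of_injective
    (LinearMap.ker_toSpanSingleton ℝ he))

lemma exists_norm_eq_one_and_eq_norm_smul [Nontrivial E] (z : E) :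
    ∃ v : E, ‖v‖ = 1 ∧ z = ‖z‖ • v := by
  rcases eq_or_ne z 0 with rfl | hz
  · obtain ⟨v, hv⟩ := exists_norm_eq E zero_le_one
    exact ⟨v, hv, by simp⟩
  · exact ⟨‖z‖⁻¹ • z, norm_smul_inv_norm hz, (smul_inv_smul₀ (norm_ne_zero_iff.2 hz) z).symm⟩

variable [NormedAddCommGroup F]

lemma IsRadial.exists_deriv_eq_fderiv [NormedSpace ℝ F] (hu : IsRadial u)
    (he : ‖e‖ = 1) {z : E} (hz : DifferentiableAt ℝ u z) :
    ∃ v : E, ‖v‖ = 1 ∧ deriv (fun t : ℝ => u (t • e)) ‖z‖ = fderiv ℝ u z v := by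
  have : Nontrivial E := ⟨e, 0, ne_zero_of_norm_ne_zero (by simp [he])⟩
  obtain ⟨v, hv, hzv⟩ := exists_norm_eq_one_and_eq_norm_smul z
  have hline : HasDerivAt (fun t : ℝ => t • v) v ‖z‖ := by
    simpa using (hasDerivAt_id ‖z‖).smul_const v
  have hfderiv : HasFDerivAt u (fderiv ℝ u z) (‖z‖ • v) := by
    rw [← hzv]
    exact hz.hasFDerivAt
  refine ⟨v, hv, ?_⟩
  rw [hu.comp_smul_eq he hv]
  exact (hfderiv.comp_hasDerivAt _ hline).deriv

lemma integral_norm_comp_norm_sq [Nontrivial E] [FiniteDimensional ℝ E] [MeasurableSpace E]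
    [BorelSpace E] (μ : Measure E) [μ.IsAddHaarMeasure] (f : ℝ → F) :
    ∫ z, ‖f ‖z‖‖ ^ 2 ∂μ = Module.finrank ℝ E * μ.real (Metric.ball 0 1) *
      radialNormSq (Module.finrank ℝ E - 1) f := by
  rw [integral_fun_norm_addHaar μ fun t => ‖f t‖ ^ 2]
  simp [radialNormSq, mul_assoc]

end Radial

section Gradient

variable {N : ℕ} {F : Type*} [NormedAddCommGroup F] [NormedSpace ℝ F]
  {u : EuclideanSpace ℝ (Fin N) → F}

lemma norm_fderiv_apply_sq_le_mul_gradSq (u : EuclideanSpace ℝ (Fin N) → F)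
    (x v : EuclideanSpace ℝ (Fin N)) : ‖fderiv ℝ u x v‖ ^ 2 ≤ ‖v‖ ^ 2 * gradSq u x := by
  have hv : v = ∑ i, v i • EuclideanSpace.single i (1 : ℝ) := by
    simpa using ((EuclideanSpace.basisFun (Fin N) ℝ).sum_repr v).symm
  calc ‖fderiv ℝ u x v‖ ^ 2
      = ‖∑ i, v i • fderiv ℝ u x (EuclideanSpace.single i 1)‖ ^ 2 := by
        conv_lhs => rw [hv]
        simp only [map_sum, map_smul]
    _ ≤ (∑ i, ‖v i‖ * ‖fderiv ℝ u x (EuclideanSpace.single i 1)‖) ^ 2 := by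
        gcongr
        exact norm_sum_le_of_le _ fun i _ => (norm_smul _ _).le
    _ ≤ (∑ i, ‖v i‖ ^ 2) * ∑ i, ‖fderiv ℝ u x (EuclideanSpace.single i 1)‖ ^ 2 :=
        Finset.sum_mul_sq_le_sq_mul_sq _ _ _
    _ = ‖v‖ ^ 2 * gradSq u x := by rw [← EuclideanSpace.norm_sq_eq, gradSq]

lemma integrable_gradSq (hu : ContDiff ℝ 1 u) (huc : HasCompactSupport u) :
    Integrable (gradSq u) := by
  have hcont : Continuous (gradSq u) := by
    have := hu.continuous_fderiv one_ne_zero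
    unfold gradSq
    fun_prop
  exact hcont.integrable_of_hasCompactSupport
    ((huc.fderiv ℝ).mono fun z hz hz0 => hz (by simp [gradSq, hz0]))

lemma IsRadial.integral_deriv_le_integral_gradSq (hur : IsRadial u)
    (hu : ContDiff ℝ 1 u) (huc : HasCompactSupport u) {e : EuclideanSpace ℝ (Fin N)}
    (he : ‖e‖ = 1) :
    ∫ z : EuclideanSpace ℝ (Fin N), ‖deriv (fun t : ℝ => u (t • e)) ‖z‖‖ ^ 2 ≤
      ∫ z, gradSq u z := by
  refine integral_mono_of_nonneg (.of_forall fun _ => by positivity) (integrable_gradSq hu huc)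
    (.of_forall fun z => ?_)
  obtain ⟨v, hv, hderiv⟩ := hur.exists_deriv_eq_fderiv he (hu.differentiable one_ne_zero z)
  simpa [hderiv, hv] using norm_fderiv_apply_sq_le_mul_gradSq u z v

end Gradient

section Strauss

lemma mul_rpow_one_sub_mul_mul_rpow {c a b : ℝ} (hc : 0 < c) (ha : 0 ≤ a) (hb : 0 ≤ b) (s : ℝ) :
    (c * a) ^ (1 - s) * (c * b) ^ s = c * (a ^ (1 - s) * b ^ s) := by
  rw [mul_rpow hc.le ha, mul_rpow hc.le hb, mul_mul_mul_comm, ← rpow_add hc, sub_add_cancel,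
    rpow_one]

lemma mul_le_sqrt_mul_rpow_mul_rpow {ρ a y K P Q p q : ℝ} (hρ : 0 ≤ ρ) (hK : 0 ≤ K) (hP : 0 ≤ P)
    (hQ : 0 ≤ Q) (h : ρ ^ a * y ^ 2 ≤ K * (P ^ p * Q ^ q)) :
    ρ ^ (a / 2) * y ≤ √K * P ^ (p / 2) * Q ^ (q / 2) := by
  have hsq {x : ℝ} (hx : 0 ≤ x) (b : ℝ) : (x ^ (b / 2)) ^ 2 = x ^ b := by
    rw [← rpow_mul_natCast hx, Nat.cast_ofNat, div_mul_cancel₀ b two_ne_zero]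
  refine le_of_sq_le_sq ?_ (by positivity)
  rwa [mul_pow, mul_pow, mul_pow, sq_sqrt hK, hsq hρ, hsq hP, hsq hQ, mul_assoc]

theorem exists_rpow_norm_mul_norm_sq_le (F : Type*) [NormedAddCommGroup F] [NormedSpace ℝ F]
    (n : ℕ) (s : ℝ) (hs : 1 / 2 ≤ s) (h : (s < 1 ∧ 2 * s ≤ n + 1) ∨ (s = 1 ∧ 1 < n)) :
    ∃ K > 0, ∀ u : EuclideanSpace ℝ (Fin (n + 1)) → F,
      ContDiff ℝ 1 u → HasCompactSupport u → IsRadial u → ∀ x, x ≠ 0 →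
      ‖x‖ ^ (n + 1 - 2 * s) * ‖u x‖ ^ 2 ≤
        K * ((∫ z, ‖u z‖ ^ 2) ^ (1 - s) * (∫ z, gradSq u z) ^ s) := by
  obtain ⟨K, hK, hprofile⟩ := exists_rpow_mul_norm_sq_le F hs h
  have hpolar := integral_norm_comp_norm_sq (F := F)
    (volume : Measure (EuclideanSpace ℝ (Fin (n + 1))))
  rw [finrank_euclideanSpace_fin, Nat.add_sub_cancel] at hpolar
  set c := ((n + 1 : ℕ) : ℝ) *
    (volume : Measure (EuclideanSpace ℝ (Fin (n + 1)))).real (Metric.ball 0 1)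
  have hc : 0 < c := mul_pos (by positivity)
    (ENNReal.toReal_pos (Metric.measure_ball_pos _ _ one_pos).ne' measure_ball_lt_top.ne)
  refine ⟨K / c, by positivity, fun u hu huc hur x hx => ?_⟩
  obtain ⟨e, he⟩ := exists_norm_eq (EuclideanSpace ℝ (Fin (n + 1))) zero_le_one
  set f : ℝ → F := fun t => u (t • e)
  have hfu (z) : f ‖z‖ = u z := hur.apply_norm_smul he z
  have hA : ∫ z, ‖u z‖ ^ 2 = c * radialNormSq n f := by
    rw [← hpolar]
    simp only [hfu]
  have hB : c * radialNormSq n (deriv f) ≤ ∫ z, gradSq u z :=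
    (hpolar _).symm.trans_le (hur.integral_deriv_le_integral_gradSq hu huc he)
  calc ‖x‖ ^ (n + 1 - 2 * s) * ‖u x‖ ^ 2
      ≤ K * (radialNormSq n f ^ (1 - s) * radialNormSq n (deriv f) ^ s) := by
        rw [← hfu x]
        exact hprofile f (hu.comp (by fun_prop))
          (hasCompactSupport_comp_smul_const huc (ne_zero_of_norm_ne_zero (by simp [he]))) _
          (norm_pos_iff.2 hx)
    _ = K / c * ((c * radialNormSq n f) ^ (1 - s) * (c * radialNormSq n (deriv f)) ^ s) := by
        rw [mul_rpow_one_sub_mul_mul_rpow hc (radialNormSq_nonneg _ _) (radialNormSq_nonneg _ _),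
          ← mul_assoc (K / c), div_mul_cancel₀ K hc.ne']
    _ ≤ K / c * ((∫ z, ‖u z‖ ^ 2) ^ (1 - s) * (∫ z, gradSq u z) ^ s) := by
        rw [hA]
        have := radialNormSq_nonneg n f
        have := radialNormSq_nonneg n (deriv f)
        gcongr

theorem radial_sobolev_strauss_general {F : Type*} [NormedAddCommGroup F] [NormedSpace ℝ F]
    (N : ℕ) (s : ℝ) (hs : 1 / 2 ≤ s) (h : (s < 1 ∧ 2 * s ≤ N) ∨ (s = 1 ∧ 2 < N)) :
    ∃ C > 0, ∀ u : EuclideanSpace ℝ (Fin N) → F,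
      ContDiff ℝ 1 u → HasCompactSupport u → IsRadial u → ∀ x, x ≠ 0 →
      ‖x‖ ^ (((N : ℝ) - 2 * s) / 2) * ‖u x‖ ≤
        C * (∫ z, ‖u z‖ ^ 2) ^ ((1 - s) / 2) * (∫ z, gradSq u z) ^ (s / 2) := by
  obtain ⟨n, rfl⟩ : ∃ n, N = n + 1 := by
    refine Nat.exists_eq_succ_of_ne_zero ?_
    rintro rfl
    rcases h with ⟨-, hsN⟩ | ⟨-, hN⟩
    · norm_num at hsN
      linarith
    · omega
  push_cast at h ⊢
  obtain ⟨K, hK, hbound⟩ := exists_rpow_norm_mul_norm_sq_le F n s hs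
    (h.imp_right (And.imp_right Nat.succ_lt_succ_iff.1))
  refine ⟨√K, by positivity, fun u hu huc hur x hx => ?_⟩
  exact mul_le_sqrt_mul_rpow_mul_rpow (norm_nonneg x) hK.le
    (integral_nonneg fun z => by positivity)
    (integral_nonneg fun z => Finset.sum_nonneg fun i _ => by positivity)
    (hbound u hu huc hur x hx)

end Strauss

/-- Radial Sobolev (Strauss) inequality:
`|x|^{(N−2s)/2} |u(x)| ≤ C ‖u‖_{L²}^{1−s} ‖∇u‖_{L²}^{s}` for radial `u`. -/
theorem radial_sobolev_strauss (N : ℕ) (s : ℝ)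
    (h : (2 ≤ N ∧ 1 / 2 ≤ s ∧ s < 1) ∨ (3 ≤ N ∧ s = 1)) :
    ∃ C > 0, ∀ u : EuclideanSpace ℝ (Fin N) → ℂ,
      ContDiff ℝ (⊤ : ℕ∞) u → HasCompactSupport u →
      (∀ x y : EuclideanSpace ℝ (Fin N), ‖x‖ = ‖y‖ → u x = u y) →
      ∀ x : EuclideanSpace ℝ (Fin N), x ≠ 0 →
      ‖x‖ ^ (((N : ℝ) - 2 * s) / 2) * ‖u x‖ ≤
        C * (∫ z, ‖u z‖ ^ 2) ^ ((1 - s) / 2) * (∫ z, gradSq u z) ^ (s / 2) := by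
  have hN : (2 : ℝ) ≤ N := by exact_mod_cast (by omega : 2 ≤ N)
  obtain ⟨C, hC, hbound⟩ := radial_sobolev_strauss_general (F := ℂ) N s (by grind) (by grind)
  exact ⟨C, hC, fun u hu => hbound u (hu.of_le (by exact_mod_cast le_top))⟩
end

section
/- Let N ≥ 3, α ∈ ((N−4)₊, N) and 2 ≤ p < (N+α)/(N−2). For every M > 0 there exists C > 0 such that for all smooth compactly supported u, v, φ : ℝ^N → ℂ with ‖u‖_{H¹} ≤ M and ‖v‖_{H¹} ≤ M, | ∫_{ℝ^N} [ (I_α ∗ |u|^p)(x) |u(x)|^{p−2} u(x) − (I_α ∗ |v|^p)(x) |v(x)|^{p−2} v(x) ] · conj(φ(x)) dx | ≤ C ‖u − v‖_{H¹} ‖φ‖_{H¹}. -/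
open MeasureTheory Real
open scoped BigOperators

/-- The normalization constant `𝒜 = Γ((N−α)/2) / (Γ(α/2) π^{N/2} 2^α)` of
the Riesz potential `I_α(x) = 𝒜 |x|^{α−N}`. -/
noncomputable def rieszConst (N : ℕ) (α : ℝ) : ℝ :=
  Real.Gamma (((N : ℝ) - α) / 2) /
    (Real.Gamma (α / 2) * Real.pi ^ ((N : ℝ) / 2) * 2 ^ α)

/-- The Riesz convolution `(I_α ∗ |u|^p)(x) = ∫ I_α(x−y) |u(y)|^p dy`. -/
noncomputable def rieszConv (N : ℕ) (α p : ℝ) (u : EuclideanSpace ℝ (Fin N) → ℂ)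
    (x : EuclideanSpace ℝ (Fin N)) : ℝ :=
  ∫ y, rieszConst N α * ‖x - y‖ ^ (α - (N : ℝ)) * ‖u y‖ ^ p

/-- The Choquard nonlocal term `∫ (I_α ∗ |u|^p)(x) |u(x)|^p dx`. -/
noncomputable def choquardTerm (N : ℕ) (α p : ℝ)
    (u : EuclideanSpace ℝ (Fin N) → ℂ) : ℝ :=
  ∫ x, rieszConv N α p u x * ‖u x‖ ^ p

/-- The `H¹` norm `(∫ (|u|² + |∇u|²))^{1/2}`. -/
noncomputable def H1Norm {N : ℕ} (u : EuclideanSpace ℝ (Fin N) → ℂ) : ℝ :=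
  Real.sqrt (∫ x, (‖u x‖ ^ 2 + gradSq u x))

/-!
With `w = |u| + |v|`, the elementary estimates for `|u|^p - |v|^p` and
`|u|^(p-2) u - |v|^(p-2) v` bound the difference of the two nonlinearities pointwise by a multiple
of `w^(p-1) (k ∗ (w^(p-1) |u - v|)) + w^(p-2) |u - v| (k ∗ w^p)`, where `k = |x|^(α-N)`. Tested
against `|φ|`, both terms have the shape `∫ (w^(p-2) f₁ f₂) (k ∗ (w^(p-2) g₁ g₂))`.

No Hardy–Littlewood–Sobolev inequality is needed, because `p` is strictly below the critical
exponent: near the origin `k` lies in some `L^s` for which Young's inequality only involves `L^q`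
norms of `w, f₁, f₂, g₁, g₂` with `2 ≤ q ≤ 2N/(N-2)`, and away from the origin `k ≤ 1`. The Sobolev
inequality and interpolation control these `L^q` norms by the `H¹` norm.
-/

open scoped ENNReal NNReal

section PowerDifferences

lemma rpow_sub_rpow_le_mul_rpow_sub_one {a b p : ℝ} (hb : 0 ≤ b) (hba : b ≤ a) (hp : 1 ≤ p) :
    a ^ p - b ^ p ≤ p * a ^ (p - 1) * (a - b) := by
  obtain ha | ha := (hb.trans hba).eq_or_lt
  · obtain rfl : b = 0 := le_antisymm (ha ▸ hba) hb
    simp [← ha]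
  have bernoulli : 1 + p * (b / a - 1) ≤ (b / a) ^ p := by
    simpa using one_add_mul_self_le_rpow_one_add (s := b / a - 1)
      (by linarith [div_nonneg hb ha.le]) hp
  rw [div_rpow hb ha.le, le_div_iff₀ (rpow_pos_of_pos ha p)] at bernoulli
  have expand : (1 + p * (b / a - 1)) * a ^ p = a ^ p - p * a ^ (p - 1) * (a - b) := by
    rw [rpow_sub_one ha.ne']
    field_simp
    ring
  linarith

variable {F : Type*} [NormedAddCommGroup F]

lemma abs_norm_rpow_sub_norm_rpow_le (x y : F) {p : ℝ} (hp : 1 ≤ p) :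
    |‖x‖ ^ p - ‖y‖ ^ p| ≤ p * ((‖x‖ + ‖y‖) ^ (p - 1) * ‖x - y‖) := by
  wlog hyx : ‖y‖ ≤ ‖x‖ generalizing x y
  · simpa only [abs_sub_comm, add_comm, norm_sub_rev] using this y x (le_of_not_ge hyx)
  have hpow : ‖y‖ ^ p ≤ ‖x‖ ^ p := by gcongr
  calc |‖x‖ ^ p - ‖y‖ ^ p| = ‖x‖ ^ p - ‖y‖ ^ p := abs_of_nonneg (sub_nonneg.2 hpow)
    _ ≤ p * ‖x‖ ^ (p - 1) * (‖x‖ - ‖y‖) :=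
      rpow_sub_rpow_le_mul_rpow_sub_one (norm_nonneg y) hyx hp
    _ ≤ p * (‖x‖ + ‖y‖) ^ (p - 1) * ‖x - y‖ := by
      gcongr
      · exact le_add_of_nonneg_right (norm_nonneg y)
      · exact norm_sub_norm_le x y
    _ = p * ((‖x‖ + ‖y‖) ^ (p - 1) * ‖x - y‖) := mul_assoc ..

lemma norm_norm_rpow_smul_sub_le [NormedSpace ℝ F] (x y : F) {r : ℝ} (hr : 0 ≤ r) :
    ‖‖x‖ ^ r • x - ‖y‖ ^ r • y‖ ≤ (r + 1) * ((‖x‖ + ‖y‖) ^ r * ‖x - y‖) := by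
  wlog hyx : ‖y‖ ≤ ‖x‖ generalizing x y
  · simpa only [add_comm, norm_sub_rev] using this y x (le_of_not_ge hyx)
  have hpow : ‖y‖ ^ r ≤ ‖x‖ ^ r := by gcongr
  have hsucc (z : F) : ‖z‖ ^ (r + 1) = ‖z‖ ^ r * ‖z‖ := by
    rw [rpow_add_of_nonneg (norm_nonneg z) hr zero_le_one, rpow_one]
  have hdiff := rpow_sub_rpow_le_mul_rpow_sub_one (norm_nonneg y) hyx (le_add_of_nonneg_left hr)
  rw [hsucc, hsucc, add_sub_cancel_right] at hdiff
  calc ‖‖x‖ ^ r • x - ‖y‖ ^ r • y‖ = ‖‖x‖ ^ r • (x - y) + (‖x‖ ^ r - ‖y‖ ^ r) • y‖ := by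
        congr 1
        module
    _ ≤ ‖x‖ ^ r * ‖x - y‖ + (‖x‖ ^ r - ‖y‖ ^ r) * ‖y‖ := by
        refine (norm_add_le _ _).trans_eq ?_
        rw [norm_smul, norm_smul, norm_of_nonneg (by positivity), norm_of_nonneg (by linarith)]
    _ ≤ ‖x‖ ^ r * ‖x - y‖ + r * (‖x‖ ^ r * (‖x‖ - ‖y‖)) := by linarith
    _ ≤ ‖x‖ ^ r * ‖x - y‖ + r * (‖x‖ ^ r * ‖x - y‖) := by
        gcongr
        exact norm_sub_norm_le x y
    _ = (r + 1) * (‖x‖ ^ r * ‖x - y‖) := by ring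
    _ ≤ (r + 1) * ((‖x‖ + ‖y‖) ^ r * ‖x - y‖) := by
        gcongr
        exact le_add_of_nonneg_right (norm_nonneg y)

lemma ofReal_mul_add_norm_rpow_mul_norm (x y z : F) {c r : ℝ} (hc : 0 ≤ c) (hr : 0 ≤ r) :
    ENNReal.ofReal (c * ((‖x‖ + ‖y‖) ^ r * ‖z‖)) =
      ENNReal.ofReal c * ((‖x‖ₑ + ‖y‖ₑ) ^ r * ‖z‖ₑ) := by
  rw [ENNReal.ofReal_mul hc, ENNReal.ofReal_mul (by positivity),
    ← ENNReal.ofReal_rpow_of_nonneg (by positivity) hr,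
    ENNReal.ofReal_add (norm_nonneg _) (norm_nonneg _), ofReal_norm, ofReal_norm, ofReal_norm]

lemma enorm_norm_rpow_sub_norm_rpow_le (x y : F) {p : ℝ} (hp : 1 ≤ p) :
    ‖‖x‖ ^ p - ‖y‖ ^ p‖ₑ ≤ ENNReal.ofReal p * ((‖x‖ₑ + ‖y‖ₑ) ^ (p - 1) * ‖x - y‖ₑ) := by
  rw [← ofReal_mul_add_norm_rpow_mul_norm x y _ (by linarith) (by linarith), ← ofReal_norm]
  exact ENNReal.ofReal_le_ofReal (abs_norm_rpow_sub_norm_rpow_le x y hp)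

lemma enorm_norm_rpow_smul_sub_le [NormedSpace ℝ F] (x y : F) {r : ℝ} (hr : 0 ≤ r) :
    ‖‖x‖ ^ r • x - ‖y‖ ^ r • y‖ₑ ≤
      ENNReal.ofReal (r + 1) * ((‖x‖ₑ + ‖y‖ₑ) ^ r * ‖x - y‖ₑ) := by
  rw [← ofReal_mul_add_norm_rpow_mul_norm x y _ (by linarith) hr, ← ofReal_norm]
  exact ENNReal.ofReal_le_ofReal (norm_norm_rpow_smul_sub_le x y hr)

lemma enorm_norm_rpow (x : F) {r : ℝ} (hr : 0 ≤ r) : ‖‖x‖ ^ r‖ₑ = ‖x‖ₑ ^ r := by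
  rw [enorm_of_nonneg (by positivity), ← ENNReal.ofReal_rpow_of_nonneg (norm_nonneg x) hr,
    ofReal_norm]

end PowerDifferences

section Holder

lemma ennreal_rpow_rpow_mul_rpow_rpow (z : ℝ≥0∞) {a b s t : ℝ} (hs : 0 ≤ a * s) (ht : 0 ≤ b * t) :
    (z ^ a) ^ s * (z ^ b) ^ t = z ^ (a * s + b * t) := by
  rw [← ENNReal.rpow_mul, ← ENNReal.rpow_mul, ENNReal.rpow_add_of_nonneg _ _ hs ht]

variable {X : Type*} [MeasurableSpace X] {μ : Measure X}

lemma lintegral_rpow_mul_rpow_mul_rpow_le {f g h : X → ℝ≥0∞} (hf : AEMeasurable f μ)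
    (hg : AEMeasurable g μ) (hh : AEMeasurable h μ) {p q r : ℝ} (hp : 0 ≤ p) (hq : 0 ≤ q)
    (hr : 0 ≤ r) (hpqr : p + q + r = 1) :
    ∫⁻ x, f x ^ p * g x ^ q * h x ^ r ∂μ ≤
      (∫⁻ x, f x ∂μ) ^ p * (∫⁻ x, g x ∂μ) ^ q * (∫⁻ x, h x ∂μ) ^ r := by
  simpa [Fin.prod_univ_three] using
    ENNReal.lintegral_prod_norm_pow_le (μ := μ) Finset.univ (f := ![f, g, h]) (p := ![p, q, r])
      (by simp [Fin.forall_fin_succ, hf, hg, hh]) (by simpa [Fin.sum_univ_three])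
      (by simp [Fin.forall_fin_succ, hp, hq, hr])

lemma eLpNorm'_rpow_mul_mul_le {f g h : X → ℝ≥0∞} (hf : AEMeasurable f μ)
    (hg : AEMeasurable g μ) (hh : AEMeasurable h μ) {p a : ℝ} (hp : 2 ≤ p) (ha : 0 < a) :
    eLpNorm' (fun x => f x ^ (p - 2) * g x * h x) a μ ≤
      eLpNorm' f (p * a) μ ^ (p - 2) * eLpNorm' g (p * a) μ * eLpNorm' h (p * a) μ := by
  have hp0 : 0 < p := by linarith
  have hp2 : 0 ≤ (p - 2) / p := div_nonneg (by linarith) hp0.le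
  have hweight : p * a * ((p - 2) / p) = (p - 2) * a := by field_simp
  have hweight_one : p * a * (1 / p) = a := by field_simp
  have hroot : (p - 2) / p * (1 / a) = 1 / (p * a) * (p - 2) := by field_simp
  have hroot_one : 1 / p * (1 / a) = 1 / (p * a) := by field_simp
  have holder := lintegral_rpow_mul_rpow_mul_rpow_le (hf.pow_const (p * a)) (hg.pow_const (p * a))
    (hh.pow_const (p * a)) hp2 (one_div_nonneg.2 hp0.le) (one_div_nonneg.2 hp0.le)
    (by field_simp; ring)
  simp only [← ENNReal.rpow_mul, hweight, hweight_one] at holder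
  simp only [eLpNorm', enorm_eq_self, ENNReal.mul_rpow_of_nonneg _ _ ha.le, ← ENNReal.rpow_mul]
  refine (ENNReal.rpow_le_rpow holder (by positivity)).trans_eq ?_
  simp only [ENNReal.mul_rpow_of_nonneg _ _ (one_div_nonneg.2 ha.le), ← ENNReal.rpow_mul, hroot,
    hroot_one]

end Holder

section IntersectionNorm

variable {X ε : Type*} [MeasurableSpace X] [TopologicalSpace ε] [ContinuousENorm ε]
  {μ : Measure X} {q q₀ q₁ : ℝ}

/-- The norm `max ‖f‖_{q₀} ‖f‖_{q₁}` of `L^{q₀} ∩ L^{q₁}`, for real exponents. -/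
noncomputable def eLpInterNorm (f : X → ε) (q₀ q₁ : ℝ) (μ : Measure X) : ℝ≥0∞ :=
  max (eLpNorm' f q₀ μ) (eLpNorm' f q₁ μ)

lemma eLpInterNorm_enorm (f : X → ε) :
    eLpInterNorm (fun x => ‖f x‖ₑ) q₀ q₁ μ = eLpInterNorm f q₀ q₁ μ := by
  simp only [eLpInterNorm, eLpNorm'_enorm]

lemma eLpNorm'_le_eLpInterNorm {f : X → ε} (hf : AEStronglyMeasurable f μ) (hq₀ : 0 < q₀)
    (hq : q ∈ Set.Icc q₀ q₁) : eLpNorm' f q μ ≤ eLpInterNorm f q₀ q₁ μ := by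
  obtain ⟨hq₀q, hqq₁⟩ := hq
  have hq0 : 0 < q := hq₀.trans_le hq₀q
  have hq₁0 : 0 < q₁ := hq0.trans_le hqq₁
  obtain ⟨s, t, hs, ht, hst, hstq⟩ : q ∈ segment ℝ q₀ q₁ := by
    rw [segment_eq_Icc (hq₀q.trans hqq₁)]
    exact ⟨hq₀q, hqq₁⟩
  simp only [smul_eq_mul, mul_comm s, mul_comm t] at hstq
  have hinterp (z : ℝ≥0∞) : (z ^ q₀) ^ s * (z ^ q₁) ^ t = z ^ q := by
    rw [ennreal_rpow_rpow_mul_rpow_rpow z (by positivity) (by positivity), hstq]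
  rw [← ENNReal.rpow_le_rpow_iff hq0, ← lintegral_rpow_enorm_eq_rpow_eLpNorm' hq0]
  calc ∫⁻ x, ‖f x‖ₑ ^ q ∂μ = ∫⁻ x, (‖f x‖ₑ ^ q₀) ^ s * (‖f x‖ₑ ^ q₁) ^ t ∂μ := by
        simp only [hinterp]
    _ ≤ (∫⁻ x, ‖f x‖ₑ ^ q₀ ∂μ) ^ s * (∫⁻ x, ‖f x‖ₑ ^ q₁ ∂μ) ^ t :=
        ENNReal.lintegral_mul_norm_pow_le (hf.enorm.pow_const _) (hf.enorm.pow_const _) hs ht hst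
    _ = (eLpNorm' f q₀ μ ^ q₀) ^ s * (eLpNorm' f q₁ μ ^ q₁) ^ t := by
        rw [lintegral_rpow_enorm_eq_rpow_eLpNorm' hq₀, lintegral_rpow_enorm_eq_rpow_eLpNorm' hq₁0]
    _ ≤ (eLpInterNorm f q₀ q₁ μ ^ q₀) ^ s * (eLpInterNorm f q₀ q₁ μ ^ q₁) ^ t := by
        gcongr
        · exact le_max_left _ _
        · exact le_max_right _ _
    _ = eLpInterNorm f q₀ q₁ μ ^ q := hinterp _

lemma eLpInterNorm_add_le {f g : X → ℝ≥0∞} (hf : AEMeasurable f μ) (hg : AEMeasurable g μ)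
    (hq₀ : 1 ≤ q₀) (hq₁ : 1 ≤ q₁) :
    eLpInterNorm (fun x => f x + g x) q₀ q₁ μ ≤
      eLpInterNorm f q₀ q₁ μ + eLpInterNorm g q₀ q₁ μ := by
  have minkowski {q : ℝ} (hq : 1 ≤ q) :
      eLpNorm' (fun x => f x + g x) q μ ≤ eLpNorm' f q μ + eLpNorm' g q μ := by
    simpa only [eLpNorm', enorm_eq_self] using! ENNReal.lintegral_Lp_add_le hf hg hq
  exact max_le
    ((minkowski hq₀).trans (add_le_add (le_max_left _ _) (le_max_left _ _)))
    ((minkowski hq₁).trans (add_le_add (le_max_right _ _) (le_max_right _ _)))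

lemma eLpNorm'_rpow_mul_mul_le_eLpInterNorm {f g h : X → ℝ≥0∞} (hf : AEMeasurable f μ)
    (hg : AEMeasurable g μ) (hh : AEMeasurable h μ) {p a : ℝ} (hp : 2 ≤ p) (hq₀ : 0 < q₀)
    (hpa : p * a ∈ Set.Icc q₀ q₁) :
    eLpNorm' (fun x => f x ^ (p - 2) * g x * h x) a μ ≤
      eLpInterNorm f q₀ q₁ μ ^ (p - 2) * eLpInterNorm g q₀ q₁ μ * eLpInterNorm h q₀ q₁ μ := by
  have ha : 0 < a := pos_of_mul_pos_right (hq₀.trans_le hpa.1) (by linarith)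
  refine (eLpNorm'_rpow_mul_mul_le hf hg hh hp ha).trans ?_
  have : 0 ≤ p - 2 := by linarith
  gcongr
  · exact eLpNorm'_le_eLpInterNorm hf.aestronglyMeasurable hq₀ hpa
  · exact eLpNorm'_le_eLpInterNorm hg.aestronglyMeasurable hq₀ hpa
  · exact eLpNorm'_le_eLpInterNorm hh.aestronglyMeasurable hq₀ hpa

end IntersectionNorm

section Young

variable {G : Type*} [AddCommGroup G] [MeasurableSpace G] [MeasurableAdd₂ G] [MeasurableNeg G]
  {μ : Measure G} [SFinite μ] [μ.IsAddLeftInvariant]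

lemma ennreal_pairwise_mul_rpow (x y z : ℝ≥0∞) {r s t : ℝ} (hr : 0 ≤ r) (hs : 0 ≤ s)
    (ht : 0 ≤ t) :
    (x * y) ^ r * (x * z) ^ s * (y * z) ^ t = x ^ (r + s) * y ^ (r + t) * z ^ (s + t) := by
  rw [ENNReal.mul_rpow_of_nonneg _ _ hr, ENNReal.mul_rpow_of_nonneg _ _ hs,
    ENNReal.mul_rpow_of_nonneg _ _ ht, ENNReal.rpow_add_of_nonneg _ _ hr hs,
    ENNReal.rpow_add_of_nonneg _ _ hr ht, ENNReal.rpow_add_of_nonneg _ _ hs ht]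
  ring

lemma lintegral_prod_snd_mul_comp_neg_add {g k : G → ℝ≥0∞} (hg : AEMeasurable g μ)
    (hk : AEMeasurable k μ) :
    ∫⁻ z, g z.2 * k (-z.2 + z.1) ∂μ.prod μ = (∫⁻ x, g x ∂μ) * ∫⁻ x, k x ∂μ := by
  rw [lintegral_prod_symm _ (by fun_prop), ← lintegral_mul_const'' _ hg]
  refine lintegral_congr fun y => ?_
  dsimp only
  rw [lintegral_const_mul'' _ (by fun_prop), lintegral_add_left_eq_self]

variable [μ.IsNegInvariant]

lemma lintegral_prod_fst_mul_comp_neg_add {f k : G → ℝ≥0∞} (hf : AEMeasurable f μ)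
    (hk : AEMeasurable k μ) :
    ∫⁻ z, f z.1 * k (-z.2 + z.1) ∂μ.prod μ = (∫⁻ x, f x ∂μ) * ∫⁻ x, k x ∂μ := by
  rw [lintegral_prod _ (by fun_prop), ← lintegral_mul_const'' _ hf]
  refine lintegral_congr fun x => ?_
  dsimp only
  rw [lintegral_const_mul'' _ (by fun_prop), lintegral_neg_eq_self (fun y => k (y + x)),
    lintegral_add_right_eq_self]

-- Three-function Hölder, applied to `f(x)^a g(y)^b`, `f(x)^a k(x-y)^s` and `g(y)^b k(x-y)^s`.
lemma lintegral_mul_lconvolution_le {f g k : G → ℝ≥0∞} (hf : AEMeasurable f μ)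
    (hg : AEMeasurable g μ) (hk : AEMeasurable k μ) {a b s : ℝ} (ha : 1 ≤ a) (hb : 1 ≤ b)
    (hs : 1 ≤ s) (habs : 1 / s + 1 / a + 1 / b = 2) :
    ∫⁻ x, f x * (g ⋆ₗ[μ] k) x ∂μ ≤
      eLpNorm' k s μ * (eLpNorm' f a μ * eLpNorm' g b μ) := by
  have hcompl {c : ℝ} (hc : 1 ≤ c) : 0 ≤ 1 - 1 / c :=
    sub_nonneg.2 ((one_div_le_one_div_of_le one_pos hc).trans_eq one_div_one)
  have hfs : 1 - 1 / s + (1 - 1 / b) = 1 / a := by linarith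
  have hgs : 1 - 1 / s + (1 - 1 / a) = 1 / b := by linarith
  have hks : 1 - 1 / b + (1 - 1 / a) = 1 / s := by linarith
  have hroot (z : ℝ≥0∞) {c : ℝ} (hc : 1 ≤ c) : (z ^ c) ^ (1 / c) = z := by
    rw [one_div, ENNReal.rpow_rpow_inv (by linarith)]
  have holder := lintegral_rpow_mul_rpow_mul_rpow_le (μ := μ.prod μ)
    (f := fun z => f z.1 ^ a * g z.2 ^ b) (g := fun z => f z.1 ^ a * k (-z.2 + z.1) ^ s)
    (h := fun z => g z.2 ^ b * k (-z.2 + z.1) ^ s)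
    (by fun_prop) (by fun_prop) (by fun_prop) (hcompl hs) (hcompl hb) (hcompl ha) (by linarith)
  rw [lintegral_prod_mul (hf.pow_const a) (hg.pow_const b),
    lintegral_prod_fst_mul_comp_neg_add (hf.pow_const a) (hk.pow_const s),
    lintegral_prod_snd_mul_comp_neg_add (hg.pow_const b) (hk.pow_const s)] at holder
  simp only [ennreal_pairwise_mul_rpow _ _ _ (hcompl hs) (hcompl hb) (hcompl ha), hfs, hgs, hks,
    hroot _ ha, hroot _ hb, hroot _ hs] at holder
  calc ∫⁻ x, f x * (g ⋆ₗ[μ] k) x ∂μ = ∫⁻ z, f z.1 * g z.2 * k (-z.2 + z.1) ∂μ.prod μ := by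
        rw [lintegral_prod _ (by fun_prop)]
        refine lintegral_congr fun x => ?_
        simp only [lconvolution_def, mul_assoc]
        rw [lintegral_const_mul'' _ (by fun_prop)]
    _ ≤ _ := holder
    _ = eLpNorm' k s μ * (eLpNorm' f a μ * eLpNorm' g b μ) := by
        simp only [eLpNorm', enorm_eq_self, mul_comm]

end Young

section PowerKernel

variable {E : Type*} [NormedAddCommGroup E]

/-- The radial kernel `|x|^β` as an extended nonnegative function. For `β < 0` its value at the
origin is `0`. -/
noncomputable def powerKernel (β : ℝ) (x : E) : ℝ≥0∞ := ENNReal.ofReal (‖x‖ ^ β)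

lemma powerKernel_le_indicator_add_one {β : ℝ} (hβ : β ≤ 0) :
    powerKernel β ≤ (Metric.ball (0 : E) 1).indicator (powerKernel β) + 1 := by
  intro x
  by_cases hx : x ∈ Metric.ball (0 : E) 1
  · simp [hx]
  · rw [mem_ball_zero_iff, not_lt] at hx
    simpa [powerKernel, hx] using rpow_le_one_of_one_le_of_nonpos hx hβ

lemma powerKernel_rpow (β : ℝ) (x : E) {s : ℝ} (hs : 0 ≤ s) :
    powerKernel β x ^ s = powerKernel (β * s) x := by
  rw [powerKernel, powerKernel, ENNReal.ofReal_rpow_of_nonneg (by positivity) hs,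
    rpow_mul (norm_nonneg x)]

variable [MeasurableSpace E]

lemma lconvolution_powerKernel_le {μ : Measure E} {g : E → ℝ≥0∞} (hg : AEMeasurable g μ) {β : ℝ}
    (hβ : β ≤ 0) (x : E) :
    (g ⋆ₗ[μ] powerKernel β) x ≤
      (g ⋆ₗ[μ] (Metric.ball (0 : E) 1).indicator (powerKernel β)) x + ∫⁻ y, g y ∂μ := by
  rw [lconvolution_def, lconvolution_def, ← lintegral_add_right' _ hg]
  refine lintegral_mono fun y => ?_
  rw [← mul_add_one]
  gcongr
  exact powerKernel_le_indicator_add_one hβ _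

variable [BorelSpace E]

lemma measurable_powerKernel (β : ℝ) : Measurable (powerKernel β : E → ℝ≥0∞) :=
  (measurable_norm.pow_const β).ennreal_ofReal

variable [NormedSpace ℝ E] [FiniteDimensional ℝ E] (μ : Measure E) [μ.IsAddHaarMeasure]

lemma locallyIntegrable_norm_rpow (hd : 1 ≤ Module.finrank ℝ E) {β : ℝ}
    (hβ : -(Module.finrank ℝ E : ℝ) < β) : LocallyIntegrable (fun x : E => ‖x‖ ^ β) μ := by
  refine locallyIntegrable_of_norm_le_rpow (C := 1) hd (neg_lt.1 hβ) (.of_forall fun x => ?_)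
    (measurable_norm.pow_const β).aestronglyMeasurable
  rw [norm_of_nonneg (by positivity), neg_neg, one_mul]

lemma eLpNorm'_indicator_ball_powerKernel_ne_top (hd : 1 ≤ Module.finrank ℝ E) {β s : ℝ}
    (hs : 0 < s) (hβ : -(Module.finrank ℝ E : ℝ) < β * s) :
    eLpNorm' ((Metric.ball (0 : E) 1).indicator (powerKernel β)) s μ ≠ ⊤ := by
  have hint : IntegrableOn (fun x : E => ‖x‖ ^ (β * s)) (Metric.ball 0 1) μ :=
    ((locallyIntegrable_norm_rpow μ hd hβ).integrableOn_isCompact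
      (isCompact_closedBall 0 1)).mono_set Metric.ball_subset_closedBall
  have hpow (x : E) : (Metric.ball (0 : E) 1).indicator (powerKernel β) x ^ s =
      (Metric.ball (0 : E) 1).indicator (powerKernel (β * s)) x := by
    by_cases hx : x ∈ Metric.ball (0 : E) 1
    · simp only [Set.indicator_of_mem hx, powerKernel_rpow β x hs.le]
    · simp only [Set.indicator_of_notMem hx, ENNReal.zero_rpow_of_pos hs]
  simp only [eLpNorm', enorm_eq_self, hpow, lintegral_indicator measurableSet_ball]
  exact ENNReal.rpow_ne_top_of_nonneg (by positivity) hint.lintegral_lt_top.ne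

-- The kernel is `L^s` near the origin, where Young's inequality applies, and bounded by `1` away
-- from it.
lemma exists_lintegral_mul_lconvolution_powerKernel_le (hd : 1 ≤ Module.finrank ℝ E) {β a s : ℝ}
    (hβ₀ : β ≤ 0) (ha : 1 ≤ a) (hs : 1 ≤ s) (has : 1 / s + 1 / a + 1 / a = 2)
    (hβ : -(Module.finrank ℝ E : ℝ) < β * s) :
    ∃ C : ℝ≥0, ∀ f g : E → ℝ≥0∞, AEMeasurable f μ → AEMeasurable g μ →
      ∫⁻ x, f x * (g ⋆ₗ[μ] powerKernel β) x ∂μ ≤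
        C * (eLpNorm' f a μ * eLpNorm' g a μ) + eLpNorm' f 1 μ * eLpNorm' g 1 μ := by
  set kLoc : E → ℝ≥0∞ := (Metric.ball 0 1).indicator (powerKernel β)
  have hkLoc : Measurable kLoc := (measurable_powerKernel β).indicator measurableSet_ball
  lift eLpNorm' kLoc s μ to ℝ≥0 using
    eLpNorm'_indicator_ball_powerKernel_ne_top μ hd (by linarith) hβ with C hC
  refine ⟨C, fun f g hf hg => ?_⟩
  calc ∫⁻ x, f x * (g ⋆ₗ[μ] powerKernel β) x ∂μ
      ≤ ∫⁻ x, f x * (g ⋆ₗ[μ] kLoc) x + f x * ∫⁻ y, g y ∂μ ∂μ := by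
        gcongr with x
        rw [← mul_add]
        gcongr
        exact lconvolution_powerKernel_le hg hβ₀ x
    _ = ∫⁻ x, f x * (g ⋆ₗ[μ] kLoc) x ∂μ + eLpNorm' f 1 μ * eLpNorm' g 1 μ := by
        rw [lintegral_add_left' (by fun_prop), lintegral_mul_const'' _ hf]
        simp only [eLpNorm', enorm_eq_self, ENNReal.rpow_one, one_div_one]
    _ ≤ C * (eLpNorm' f a μ * eLpNorm' g a μ) + eLpNorm' f 1 μ * eLpNorm' g 1 μ := by
        gcongr
        rw [hC]
        exact lintegral_mul_lconvolution_le hf hg hkLoc.aemeasurable ha ha hs has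

end PowerKernel

section QuadrilinearForm

lemma ennreal_rpow_mul_self (z : ℝ≥0∞) {r : ℝ} (hr : 0 ≤ r) : z ^ r * z = z ^ (r + 1) := by
  rw [ENNReal.rpow_add_of_nonneg _ _ hr zero_le_one, ENNReal.rpow_one]

-- `s (n - α) < n` puts `|x|^(α - n)` locally in `L^s`, and `2n / (n - 2)` is the Sobolev exponent.
lemma exists_young_exponents {n α p : ℝ} (hn : 2 < n) (hα : 0 < α) (hαn : α < n)
    (hp : p < (n + α) / (n - 2)) :
    ∃ s a : ℝ, 1 ≤ s ∧ 1 ≤ a ∧ 1 / s + 1 / a + 1 / a = 2 ∧ s * (n - α) < n ∧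
      p * a ≤ 2 * n / (n - 2) := by
  have hn2 : 0 < n - 2 := by linarith
  rw [lt_div_iff₀ hn2] at hp
  set δ := 2 * n - p * (n - 2) with hδ
  have hαδ : n - α < δ := by linarith
  have hδ0 : 0 < δ := by linarith
  set s := max 1 (n / δ)
  have hs1 : 1 ≤ s := le_max_left _ _
  have hsδ : n ≤ s * δ := (div_le_iff₀ hδ0).1 (le_max_right _ _)
  have hsα : s * (n - α) < n := by
    rw [← lt_div_iff₀ (by linarith)]
    exact max_lt ((one_lt_div (by linarith)).2 (by linarith)) (by gcongr)
  have h2s : 0 < 2 * s - 1 := by linarith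
  refine ⟨s, 2 * s / (2 * s - 1), hs1, ?_, ?_, hsα, ?_⟩
  · rw [one_le_div h2s]
    linarith
  · field_simp
    ring
  · rw [← mul_div_assoc, div_le_div_iff₀ h2s hn2]
    linear_combination 2 * hsδ - 2 * s * hδ

variable {E : Type*} [NormedAddCommGroup E] [NormedSpace ℝ E] [FiniteDimensional ℝ E]
  [MeasurableSpace E] [BorelSpace E] (μ : Measure E) [μ.IsAddHaarMeasure]

lemma exists_lintegral_rpow_mul_lconvolution_powerKernel_le (hd : 2 < Module.finrank ℝ E)
    {α p : ℝ} (hα : 0 < α) (hαd : α < Module.finrank ℝ E) (hp : 2 ≤ p)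
    (hpd : p < (Module.finrank ℝ E + α) / (Module.finrank ℝ E - 2)) :
    ∃ C : ℝ≥0, ∀ w f₁ f₂ g₁ g₂ : E → ℝ≥0∞, AEMeasurable w μ → AEMeasurable f₁ μ →
      AEMeasurable f₂ μ → AEMeasurable g₁ μ → AEMeasurable g₂ μ →
      letI n (h : E → ℝ≥0∞) :=
        eLpInterNorm h 2 (2 * Module.finrank ℝ E / (Module.finrank ℝ E - 2)) μ
      ∫⁻ x, w x ^ (p - 2) * f₁ x * f₂ x *
          ((fun y => w y ^ (p - 2) * g₁ y * g₂ y) ⋆ₗ[μ]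
            powerKernel (α - Module.finrank ℝ E)) x ∂μ ≤
        C * ((n w ^ (p - 2) * n f₁ * n f₂) * (n w ^ (p - 2) * n g₁ * n g₂)) := by
  have hd' : (2 : ℝ) < Module.finrank ℝ E := by exact_mod_cast hd
  obtain ⟨s, a, hs, ha, hsa, hsα, hpa⟩ := exists_young_exponents hd' hα hαd hpd
  obtain ⟨C, hC⟩ := exists_lintegral_mul_lconvolution_powerKernel_le μ (by lia)
    (by linarith : α - Module.finrank ℝ E ≤ 0) ha hs hsa (by linarith)
  refine ⟨C + 1, fun w f₁ f₂ g₁ g₂ hw hf₁ hf₂ hg₁ hg₂ => ?_⟩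
  have hpa_le : p ≤ p * a := le_mul_of_one_le_right (by linarith) ha
  have hp1_mem : p * 1 ∈ Set.Icc 2 (2 * Module.finrank ℝ E / (Module.finrank ℝ E - 2) : ℝ) :=
    ⟨by linarith, by linarith⟩
  have hpa_mem : p * a ∈ Set.Icc 2 (2 * Module.finrank ℝ E / (Module.finrank ℝ E - 2) : ℝ) :=
    ⟨by linarith, hpa⟩
  refine (hC _ _ (by fun_prop) (by fun_prop)).trans ?_
  rw [ENNReal.coe_add, add_mul, ENNReal.coe_one, one_mul]
  gcongr <;> exact eLpNorm'_rpow_mul_mul_le_eLpInterNorm ‹_› ‹_› ‹_› hp two_pos ‹_›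

lemma exists_lintegral_linearized_riesz_mul_le (hd : 2 < Module.finrank ℝ E)
    {α p : ℝ} (hα : 0 < α) (hαd : α < Module.finrank ℝ E) (hp : 2 ≤ p)
    (hpd : p < (Module.finrank ℝ E + α) / (Module.finrank ℝ E - 2)) :
    ∃ C : ℝ≥0, ∀ w f g : E → ℝ≥0∞, AEMeasurable w μ → AEMeasurable f μ → AEMeasurable g μ →
      letI n (h : E → ℝ≥0∞) :=
        eLpInterNorm h 2 (2 * Module.finrank ℝ E / (Module.finrank ℝ E - 2)) μ
      letI k : E → ℝ≥0∞ := powerKernel (α - Module.finrank ℝ E)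
      ∫⁻ x, (w x ^ (p - 1) * ((fun y => w y ^ (p - 1) * f y) ⋆ₗ[μ] k) x +
          w x ^ (p - 2) * f x * ((fun y => w y ^ p) ⋆ₗ[μ] k) x) * g x ∂μ ≤
        C * (n w ^ (2 * (p - 1)) * n f * n g) := by
  obtain ⟨C, hC⟩ := exists_lintegral_rpow_mul_lconvolution_powerKernel_le μ hd hα hαd hp hpd
  refine ⟨2 * C, fun w f g hw hf hg => ?_⟩
  have hk : Measurable (powerKernel (α - Module.finrank ℝ E) : E → ℝ≥0∞) := measurable_powerKernel _
  have hpow_one (z : ℝ≥0∞) : z ^ (p - 2) * z = z ^ (p - 1) := by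
    rw [ennreal_rpow_mul_self z (by linarith)]
    ring_nf
  have hpow (z : ℝ≥0∞) : z ^ (p - 1) * z = z ^ p := by
    rw [ennreal_rpow_mul_self z (by linarith), sub_add_cancel]
  have hpow_two_mul (z : ℝ≥0∞) : z ^ (2 * (p - 1)) = z ^ (p - 1) * z ^ (p - 1) := by
    rw [← ENNReal.rpow_add_of_nonneg _ _ (by linarith) (by linarith), two_mul]
  have hswap (z c d : ℝ≥0∞) :
      z ^ (p - 2) * c * d * z ^ p = z ^ (p - 1) * c * (z ^ (p - 1) * d) := by
    rw [← hpow, ← hpow_one]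
    ring
  have h₁ := hC w w g w f hw hw hg hw hf
  have h₂ := hC w g f w w hw hg hf hw hw
  simp only [hpow_one, hpow] at h₁ h₂
  simp only [add_mul]
  rw [lintegral_add_left' (by fun_prop)]
  simp only [mul_right_comm _ _ (g _)]
  refine (add_le_add h₁ h₂).trans_eq ?_
  rw [hswap, hpow_two_mul]
  push_cast
  ring

end QuadrilinearForm

section Sobolev

lemma norm_sq_le_sum_norm_sq_apply_basis {ι 𝕜 E F : Type*} [Fintype ι] [RCLike 𝕜]
    [NormedAddCommGroup E] [InnerProductSpace 𝕜 E] [NormedAddCommGroup F] [NormedSpace 𝕜 F]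
    (b : OrthonormalBasis ι 𝕜 E) (L : E →L[𝕜] F) : ‖L‖ ^ 2 ≤ ∑ i, ‖L (b i)‖ ^ 2 := by
  have hsum : 0 ≤ ∑ i, ‖L (b i)‖ ^ 2 := by positivity
  refine (le_sqrt (norm_nonneg L) hsum).1 (L.opNorm_le_bound (sqrt_nonneg _) fun x => ?_)
  rw [← sqrt_sq (norm_nonneg x), ← sqrt_mul hsum]
  refine le_sqrt_of_sq_le ?_
  calc ‖L x‖ ^ 2 = ‖∑ i, b.repr x i • L (b i)‖ ^ 2 := by
        conv_lhs => rw [← b.sum_repr x]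
        simp only [map_sum, map_smul]
    _ ≤ (∑ i, ‖L (b i)‖ * ‖b.repr x i‖) ^ 2 := by
        gcongr
        refine (norm_sum_le _ _).trans_eq (Finset.sum_congr rfl fun i _ => ?_)
        rw [norm_smul, mul_comm]
    _ ≤ (∑ i, ‖L (b i)‖ ^ 2) * ∑ i, ‖b.repr x i‖ ^ 2 := Finset.sum_mul_sq_le_sq_mul_sq _ _ _
    _ = (∑ i, ‖L (b i)‖ ^ 2) * ‖x‖ ^ 2 := by
        rw [← EuclideanSpace.norm_sq_eq, b.repr.norm_map]

variable {N : ℕ}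

lemma gradSq_nonneg {F : Type*} [NormedAddCommGroup F] [NormedSpace ℝ F]
    (u : EuclideanSpace ℝ (Fin N) → F) (x : EuclideanSpace ℝ (Fin N)) : 0 ≤ gradSq u x :=
  Finset.sum_nonneg fun _ _ => sq_nonneg _

lemma norm_fderiv_sq_le_gradSq {F : Type*} [NormedAddCommGroup F] [NormedSpace ℝ F]
    (u : EuclideanSpace ℝ (Fin N) → F) (x : EuclideanSpace ℝ (Fin N)) :
    ‖fderiv ℝ u x‖ ^ 2 ≤ gradSq u x := by
  simpa only [gradSq, EuclideanSpace.basisFun_apply] using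
    norm_sq_le_sum_norm_sq_apply_basis (EuclideanSpace.basisFun (Fin N) ℝ) (fderiv ℝ u x)

lemma H1Norm_nonneg (u : EuclideanSpace ℝ (Fin N) → ℂ) : 0 ≤ H1Norm u := sqrt_nonneg _

variable {u : EuclideanSpace ℝ (Fin N) → ℂ}

lemma integrable_norm_sq_add_gradSq (hu : ContDiff ℝ 1 u) (hcu : HasCompactSupport u) :
    Integrable fun x => ‖u x‖ ^ 2 + gradSq u x := by
  have hgrad : Continuous (gradSq u) := continuous_finsetSum _ fun i _ =>
    (((hu.continuous_fderiv one_ne_zero).clm_apply continuous_const).norm.pow 2)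
  have hgrad_supp : HasCompactSupport (gradSq u) := (hcu.fderiv ℝ).comp_left
    (g := fun L : EuclideanSpace ℝ (Fin N) →L[ℝ] ℂ => ∑ i, ‖L (EuclideanSpace.single i 1)‖ ^ 2)
    (by simp)
  have hnorm : Continuous fun x => ‖u x‖ ^ 2 := hu.continuous.norm.pow 2
  have hnorm_supp : HasCompactSupport fun x => ‖u x‖ ^ 2 :=
    hcu.comp_left (g := fun z => ‖z‖ ^ 2) (by simp)
  exact (hnorm.integrable_of_hasCompactSupport hnorm_supp).add
    (hgrad.integrable_of_hasCompactSupport hgrad_supp)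

lemma eLpNorm'_two_le_ofReal_H1Norm (hu : ContDiff ℝ 1 u) (hcu : HasCompactSupport u) {F : Type*}
    [NormedAddCommGroup F] {f : EuclideanSpace ℝ (Fin N) → F}
    (hf : ∀ x, ‖f x‖ ^ 2 ≤ ‖u x‖ ^ 2 + gradSq u x) :
    eLpNorm' f 2 volume ≤ ENNReal.ofReal (H1Norm u) := by
  have hnonneg (x : EuclideanSpace ℝ (Fin N)) : 0 ≤ ‖u x‖ ^ 2 + gradSq u x :=
    (sq_nonneg ‖f x‖).trans (hf x)
  rw [H1Norm, sqrt_eq_rpow, ← ENNReal.ofReal_rpow_of_nonneg (integral_nonneg hnonneg) (by norm_num),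
    ofReal_integral_eq_lintegral_ofReal (integrable_norm_sq_add_gradSq hu hcu) (.of_forall hnonneg)]
  refine ENNReal.rpow_le_rpow (lintegral_mono fun x => ?_) (by norm_num)
  rw [← ofReal_norm, ENNReal.ofReal_rpow_of_nonneg (norm_nonneg _) two_pos.le, rpow_two]
  exact ENNReal.ofReal_le_ofReal (hf x)

lemma eLpNorm'_le_eLpNorm'_fderiv (hN : 2 < N) (hu : ContDiff ℝ 1 u) (hcu : HasCompactSupport u) :
    eLpNorm' u (2 * N / (N - 2)) volume ≤
      eLpNormLESNormFDerivOfEqInnerConst (volume : Measure (EuclideanSpace ℝ (Fin N))) 2 *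
        eLpNorm' (fderiv ℝ u) 2 volume := by
  have hN2 : (0 : ℝ) < N - 2 := sub_pos.2 (by exact_mod_cast hN)
  have hN0 : (0 : ℝ) < N := by linarith
  obtain ⟨q, hq⟩ : ∃ q : ℝ≥0, (q : ℝ) = 2 * N / (N - 2) :=
    ⟨(2 * N / (N - 2) : ℝ).toNNReal, coe_toNNReal _ (by positivity)⟩
  have hq0 : q ≠ 0 := NNReal.coe_ne_zero.1 (by rw [hq]; positivity)
  have gns := eLpNorm_le_eLpNorm_fderiv_of_eq_inner volume hu hcu (p := 2) (p' := q) one_le_two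
    (by simpa using hN0) (by rw [hq, finrank_euclideanSpace_fin]; push_cast; field_simp)
  rwa [eLpNorm_nnreal_eq_eLpNorm' hq0, eLpNorm_nnreal_eq_eLpNorm' two_ne_zero, hq,
    NNReal.coe_ofNat] at gns

lemma exists_eLpInterNorm_le_H1Norm (hN : 2 < N) :
    ∃ C : ℝ≥0, ∀ u : EuclideanSpace ℝ (Fin N) → ℂ, ContDiff ℝ 1 u → HasCompactSupport u →
      eLpInterNorm u 2 (2 * N / (N - 2)) volume ≤ C * ENNReal.ofReal (H1Norm u) := by
  set S := eLpNormLESNormFDerivOfEqInnerConst (volume : Measure (EuclideanSpace ℝ (Fin N))) 2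
  refine ⟨max 1 S, fun u hu hcu => max_le ?_ ?_⟩
  · calc eLpNorm' u 2 volume ≤ ENNReal.ofReal (H1Norm u) :=
          eLpNorm'_two_le_ofReal_H1Norm hu hcu fun x => le_add_of_nonneg_right (gradSq_nonneg u x)
      _ ≤ (max 1 S : ℝ≥0) * ENNReal.ofReal (H1Norm u) :=
          le_mul_of_one_le_left' (by exact_mod_cast le_max_left 1 S)
  · calc eLpNorm' u (2 * N / (N - 2)) volume ≤ S * eLpNorm' (fderiv ℝ u) 2 volume :=
          eLpNorm'_le_eLpNorm'_fderiv hN hu hcu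
      _ ≤ (max 1 S : ℝ≥0) * ENNReal.ofReal (H1Norm u) := by
          gcongr
          · exact le_max_right 1 S
          · exact eLpNorm'_two_le_ofReal_H1Norm hu hcu fun x =>
              (norm_fderiv_sq_le_gradSq u x).trans (le_add_of_nonneg_left (sq_nonneg _))

end Sobolev

section Choquard

lemma enorm_integral_norm_sub_rpow_mul_le {E : Type*} [NormedAddCommGroup E] [MeasurableSpace E]
    (μ : Measure E) (A β : ℝ) (h : E → ℝ) (x : E) :
    ‖∫ y, A * ‖x - y‖ ^ β * h y ∂μ‖ₑ ≤ ‖A‖ₑ * ((fun y => ‖h y‖ₑ) ⋆ₗ[μ] powerKernel β) x := by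
  refine (enorm_integral_le_lintegral_enorm _).trans_eq ?_
  rw [lconvolution_def, ← lintegral_const_mul' _ _ enorm_ne_top]
  refine lintegral_congr fun y => ?_
  rw [enorm_mul, enorm_mul, enorm_of_nonneg (by positivity : 0 ≤ ‖x - y‖ ^ β), powerKernel,
    neg_add_eq_sub]
  ring

variable {N : ℕ} {α p : ℝ} {u v : EuclideanSpace ℝ (Fin N) → ℂ}

lemma integrable_norm_sub_rpow_mul_norm_rpow (hN : 1 ≤ N) (hα : 0 < α) (hp : 0 < p)
    (hu : Continuous u) (hcu : HasCompactSupport u) (A : ℝ) (x : EuclideanSpace ℝ (Fin N)) :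
    Integrable fun y => A * ‖x - y‖ ^ (α - N) * ‖u y‖ ^ p := by
  have hkernel : LocallyIntegrable fun z : EuclideanSpace ℝ (Fin N) => ‖z‖ ^ (α - N) :=
    locallyIntegrable_norm_rpow volume (by simpa using hN) (by simpa using hα)
  have hcont : Continuous fun z => ‖u (x - z)‖ ^ p :=
    (hu.comp (continuous_sub_left x)).norm.rpow_const fun _ => .inr hp.le
  have hsupp : HasCompactSupport fun z => ‖u (x - z)‖ ^ p :=
    (hcu.comp_homeomorph (Homeomorph.subLeft x)).comp_left (g := fun z => ‖z‖ ^ p)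
      (by simp [hp.ne'])
  simpa only [smul_eq_mul, sub_sub_cancel, mul_assoc] using
    ((hkernel.integrable_smul_right_of_hasCompactSupport hcont hsupp).comp_sub_left x).const_mul A

lemma enorm_rieszConv_le (hp : 0 ≤ p) (u : EuclideanSpace ℝ (Fin N) → ℂ)
    (x : EuclideanSpace ℝ (Fin N)) :
    ‖rieszConv N α p u x‖ₑ ≤
      ‖rieszConst N α‖ₑ * ((fun y => ‖u y‖ₑ ^ p) ⋆ₗ powerKernel (α - N)) x := by
  simpa only [rieszConv, enorm_norm_rpow _ hp] using
    enorm_integral_norm_sub_rpow_mul_le volume (rieszConst N α) (α - N) (fun y => ‖u y‖ ^ p) x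

lemma enorm_rieszConv_sub_le (hN : 1 ≤ N) (hα : 0 < α) (hp : 1 ≤ p) (hu : Continuous u)
    (hcu : HasCompactSupport u) (hv : Continuous v) (hcv : HasCompactSupport v)
    (x : EuclideanSpace ℝ (Fin N)) :
    ‖rieszConv N α p u x - rieszConv N α p v x‖ₑ ≤
      ‖rieszConst N α‖ₑ * (ENNReal.ofReal p *
        ((fun y => (‖u y‖ₑ + ‖v y‖ₑ) ^ (p - 1) * ‖u y - v y‖ₑ) ⋆ₗ powerKernel (α - N)) x) := by
  have hp0 : 0 < p := by linarith
  rw [rieszConv, rieszConv, ← integral_sub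
    (integrable_norm_sub_rpow_mul_norm_rpow hN hα hp0 hu hcu _ x)
    (integrable_norm_sub_rpow_mul_norm_rpow hN hα hp0 hv hcv _ x)]
  simp only [← mul_sub]
  refine (enorm_integral_norm_sub_rpow_mul_le _ _ _ _ x).trans ?_
  gcongr
  rw [lconvolution_def, lconvolution_def, ← lintegral_const_mul' _ _ ENNReal.ofReal_ne_top]
  refine lintegral_mono fun y => ?_
  rw [← mul_assoc]
  gcongr
  exact enorm_norm_rpow_sub_norm_rpow_le (u y) (v y) hp

/-- The Choquard nonlinearity `(I_α ∗ |u|^p) |u|^{p-2} u`. -/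
noncomputable def choquardNonlinearity (N : ℕ) (α p : ℝ) (u : EuclideanSpace ℝ (Fin N) → ℂ)
    (x : EuclideanSpace ℝ (Fin N)) : ℂ :=
  (rieszConv N α p u x * ‖u x‖ ^ (p - 2) : ℝ) • u x

lemma choquardNonlinearity_sub (u v : EuclideanSpace ℝ (Fin N) → ℂ)
    (x : EuclideanSpace ℝ (Fin N)) :
    choquardNonlinearity N α p u x - choquardNonlinearity N α p v x =
      (rieszConv N α p u x - rieszConv N α p v x) • ‖u x‖ ^ (p - 2) • u x +
        rieszConv N α p v x • (‖u x‖ ^ (p - 2) • u x - ‖v x‖ ^ (p - 2) • v x) := by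
  simp only [choquardNonlinearity, mul_smul, sub_smul, smul_sub]
  abel

lemma enorm_choquardNonlinearity_sub_le (hN : 1 ≤ N) (hα : 0 < α) (hp : 2 ≤ p) (hu : Continuous u)
    (hcu : HasCompactSupport u) (hv : Continuous v) (hcv : HasCompactSupport v)
    (x : EuclideanSpace ℝ (Fin N)) :
    let w (y : EuclideanSpace ℝ (Fin N)) : ℝ≥0∞ := ‖u y‖ₑ + ‖v y‖ₑ
    ‖choquardNonlinearity N α p u x - choquardNonlinearity N α p v x‖ₑ ≤
      ‖rieszConst N α‖ₑ * ENNReal.ofReal p *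
        (w x ^ (p - 1) *
            ((fun y => w y ^ (p - 1) * ‖u y - v y‖ₑ) ⋆ₗ powerKernel (α - N)) x +
          w x ^ (p - 2) * ‖u x - v x‖ₑ * ((fun y => w y ^ p) ⋆ₗ powerKernel (α - N)) x) := by
  intro w
  have hp2 : 0 ≤ p - 2 := by linarith
  have hpow : ‖‖u x‖ ^ (p - 2) • u x‖ₑ ≤ w x ^ (p - 1) := by
    rw [enorm_smul, enorm_norm_rpow _ hp2, show p - 1 = p - 2 + 1 by ring,
      ← ennreal_rpow_mul_self _ hp2]
    gcongr <;> exact le_self_add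
  have hpow_sub : ‖‖u x‖ ^ (p - 2) • u x - ‖v x‖ ^ (p - 2) • v x‖ₑ ≤
      ENNReal.ofReal p * (w x ^ (p - 2) * ‖u x - v x‖ₑ) := by
    refine (enorm_norm_rpow_smul_sub_le (u x) (v x) hp2).trans ?_
    gcongr
    linarith
  have hconv : ‖rieszConv N α p v x‖ₑ ≤
      ‖rieszConst N α‖ₑ * ((fun y => w y ^ p) ⋆ₗ powerKernel (α - N)) x := by
    refine (enorm_rieszConv_le (by linarith) v x).trans ?_
    simp only [lconvolution_def]
    gcongr with y
    exact le_add_self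
  rw [choquardNonlinearity_sub]
  refine (enorm_add_le _ _).trans ?_
  rw [enorm_smul, enorm_smul _ (_ - _)]
  grw [enorm_rieszConv_sub_le hN hα (by linarith) hu hcu hv hcv, hpow, hpow_sub, hconv]
  exact le_of_eq (by ring)

lemma exists_lintegral_enorm_choquardNonlinearity_sub_mul_le (hN : 2 < N) (hα : 0 < α)
    (hαN : α < N) (hp : 2 ≤ p) (hpN : p < (N + α) / (N - 2)) :
    ∃ C : ℝ≥0, ∀ u v φ : EuclideanSpace ℝ (Fin N) → ℂ, Continuous u → HasCompactSupport u →
      Continuous v → HasCompactSupport v → Continuous φ →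
      letI n (f : EuclideanSpace ℝ (Fin N) → ℂ) := eLpInterNorm f 2 (2 * N / (N - 2)) volume
      ∫⁻ x, ‖choquardNonlinearity N α p u x - choquardNonlinearity N α p v x‖ₑ * ‖φ x‖ₑ ≤
        C * ((n u + n v) ^ (2 * (p - 1)) * n (fun x => u x - v x) * n φ) := by
  obtain ⟨C, hC⟩ := exists_lintegral_linearized_riesz_mul_le
    (volume : Measure (EuclideanSpace ℝ (Fin N))) (p := p) (by simpa using hN) hα
    (by simpa using hαN) hp (by simpa using hpN)
  simp only [finrank_euclideanSpace_fin] at hC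
  refine ⟨‖rieszConst N α‖₊ * p.toNNReal * C, fun u v φ hu hcu hv hcv hφ => ?_⟩
  have hcoe : ((‖rieszConst N α‖₊ * p.toNNReal : ℝ≥0) : ℝ≥0∞) =
      ‖rieszConst N α‖ₑ * ENNReal.ofReal p := by push_cast; rfl
  have hq : (1 : ℝ) ≤ 2 * N / (N - 2) := by
    have : (2 : ℝ) < N := by exact_mod_cast hN
    rw [one_le_div (by linarith)]
    linarith
  have hminkowski := eLpInterNorm_add_le (μ := volume) hu.enorm.aemeasurable
    hv.enorm.aemeasurable one_le_two hq
  simp only [eLpInterNorm_enorm] at hminkowski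
  have hlinearized := hC (fun x => ‖u x‖ₑ + ‖v x‖ₑ) (fun x => ‖u x - v x‖ₑ) (fun x => ‖φ x‖ₑ)
    (by fun_prop) (by fun_prop) (by fun_prop)
  simp only [eLpInterNorm_enorm] at hlinearized
  have hp1 : 0 ≤ 2 * (p - 1) := by linarith
  grw [hminkowski] at hlinearized
  rw [ENNReal.coe_mul, mul_assoc]
  grw [← hlinearized]
  rw [hcoe, ← lintegral_const_mul' _ _ (by finiteness)]
  refine lintegral_mono fun x => ?_
  rw [← mul_assoc]
  gcongr
  exact enorm_choquardNonlinearity_sub_le (by lia) hα hp hu hcu hv hcv x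

end Choquard

theorem choquard_nonlinearity_G2_general (N : ℕ) (hN : 3 ≤ N) (α p : ℝ) (hα : 0 < α)
    (hαN : α < N) (hp : 2 ≤ p) (hpN : p < ((N : ℝ) + α) / ((N : ℝ) - 2)) :
    ∃ C : ℝ≥0, ∀ u v φ : EuclideanSpace ℝ (Fin N) → ℂ,
      ContDiff ℝ 1 u → HasCompactSupport u → ContDiff ℝ 1 v → HasCompactSupport v →
      ContDiff ℝ 1 φ → HasCompactSupport φ →
      ‖∫ x, (choquardNonlinearity N α p u x - choquardNonlinearity N α p v x) *
            (starRingEnd ℂ) (φ x)‖ ≤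
        C * (H1Norm u + H1Norm v) ^ (2 * (p - 1)) * H1Norm (fun x => u x - v x) * H1Norm φ := by
  obtain ⟨C, hC⟩ := exists_lintegral_enorm_choquardNonlinearity_sub_mul_le hN hα hαN hp hpN
  obtain ⟨S, hS⟩ := exists_eLpInterNorm_le_H1Norm hN
  have hp1 : 0 ≤ 2 * (p - 1) := by linarith
  refine ⟨C * (S ^ (2 * (p - 1)) * S * S), fun u v φ hu hcu hv hcv hφ hcφ => ?_⟩
  have hu0 := H1Norm_nonneg u
  have hv0 := H1Norm_nonneg v
  have hd0 := H1Norm_nonneg fun x => u x - v x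
  rw [← ENNReal.ofReal_le_ofReal_iff (by have := H1Norm_nonneg φ; positivity), ofReal_norm]
  calc _ ≤ ∫⁻ x, ‖choquardNonlinearity N α p u x - choquardNonlinearity N α p v x‖ₑ * ‖φ x‖ₑ := by
        refine (enorm_integral_le_lintegral_enorm _).trans_eq ?_
        simp only [enorm_mul, RCLike.enorm_conj]
    _ ≤ C * ((S * ENNReal.ofReal (H1Norm u) + S * ENNReal.ofReal (H1Norm v)) ^ (2 * (p - 1)) *
          (S * ENNReal.ofReal (H1Norm fun x => u x - v x)) * (S * ENNReal.ofReal (H1Norm φ))) := by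
        refine (hC u v φ hu.continuous hcu hv.continuous hcv hφ.continuous).trans ?_
        gcongr
        · exact hS u hu hcu
        · exact hS v hv hcv
        · exact hS _ (hu.sub hv) (hcu.sub hcv)
        · exact hS φ hφ hcφ
    _ = _ := by
        rw [← mul_add, ← ENNReal.ofReal_add hu0 hv0, ENNReal.mul_rpow_of_nonneg _ _ hp1,
          ENNReal.ofReal_rpow_of_nonneg (by positivity) hp1, ENNReal.ofReal_mul (by positivity),
          ENNReal.ofReal_mul (by positivity), ENNReal.ofReal_mul (by positivity),
          ENNReal.ofReal_coe_nnreal]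
        push_cast [ENNReal.coe_rpow_of_nonneg _ hp1]
        ring

/-- Local Lipschitz continuity (condition G2) of the Choquard nonlinearity
`g(u) = (I_α∗|u|^p)|u|^{p−2}u` from `H¹` to `H^{−1}`, in duality form. -/
theorem choquard_nonlinearity_G2 (N : ℕ) (hN : 3 ≤ N) (α p : ℝ)
    (hα1 : max ((N : ℝ) - 4) 0 < α) (hαN : α < N)
    (hp1 : 2 ≤ p) (hp2 : p < ((N : ℝ) + α) / ((N : ℝ) - 2)) :
    ∀ M > (0 : ℝ), ∃ C > (0 : ℝ), ∀ u v φ : EuclideanSpace ℝ (Fin N) → ℂ,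
      ContDiff ℝ (⊤ : ℕ∞) u → HasCompactSupport u →
      ContDiff ℝ (⊤ : ℕ∞) v → HasCompactSupport v →
      ContDiff ℝ (⊤ : ℕ∞) φ → HasCompactSupport φ →
      H1Norm u ≤ M → H1Norm v ≤ M →
      ‖∫ x, ((rieszConv N α p u x * ‖u x‖ ^ (p - 2) : ℝ) • u x
              - (rieszConv N α p v x * ‖v x‖ ^ (p - 2) : ℝ) • v x) *
            (starRingEnd ℂ) (φ x)‖ ≤
        C * H1Norm (fun x => u x - v x) * H1Norm φ := by
  intro M hM
  obtain ⟨C, hC⟩ := choquard_nonlinearity_G2_general N hN α p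
    ((le_max_right _ _).trans_lt hα1) hαN hp1 hp2
  refine ⟨C * (M + M) ^ (2 * (p - 1)) + 1, by positivity,
    fun u v φ hu hcu hv hcv hφ hcφ huM hvM => ?_⟩
  have h1 : (1 : WithTop ℕ∞) ≤ (⊤ : ℕ∞) := by exact_mod_cast le_top
  have hu0 := H1Norm_nonneg u
  have hv0 := H1Norm_nonneg v
  have hd0 := H1Norm_nonneg fun x => u x - v x
  have hφ0 := H1Norm_nonneg φ
  have hp0 : 0 ≤ 2 * (p - 1) := by linarith
  refine (hC u v φ (hu.of_le h1) hcu (hv.of_le h1) hcv (hφ.of_le h1) hcφ).trans ?_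
  gcongr
  refine le_add_of_le_of_nonneg ?_ zero_le_one
  gcongr
end
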